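/- Let n ≥ 4 be a natural number. The genus-zero Hurwitz number h_{1^2} with one degenerate branch point of reduced ramification type 1^2 (i.e., one permutation of cycle type (2,2,1^{n-4})) and m = 2n−4 simple branch points satisfies h_{1^2} = 2·((2n−4)!/(n−4)!)·n^{n−5}. -/

import Mathlib

open Equiv

set_option linter.unusedSectionVars false
set_option linter.unusedVariables false

namespace HN

section algebra
open Finset

lemma findiff {ι : Type*} [DecidableEq ι] (z : ι → ℚ) (R : Finset ι) :
    ∀ (q : Polynomial ℚ) (x : ℚ), q.degree < (R.card : WithBot ℕ) →
      ∑ S ∈ R.powerset, (-1 : ℚ) ^ S.card * q.eval (x + ∑ i ∈ S, z i) = 0 := by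
  induction R using Finset.induction_on with
  | empty =>
    intro q x hq
    have : q = 0 := by
      rw [← Polynomial.degree_eq_bot]
      simpa [Nat.WithBot.lt_zero_iff] using hq
    simp [this]
  | insert j R hj ih =>
    intro q x hq
    rw [Finset.sum_powerset_insert hj]
    have h1 : ∀ S ∈ R.powerset, (-1 : ℚ) ^ (insert j S).card * q.eval (x + ∑ i ∈ insert j S, z i)
        = - ((-1 : ℚ) ^ S.card * (q.comp (Polynomial.X + Polynomial.C (z j))).eval (x + ∑ i ∈ S, z i)) := by
      intro S hS
      have hjS : j ∉ S := fun h => hj (Finset.mem_powerset.1 hS h)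
      rw [Finset.card_insert_of_notMem hjS, Finset.sum_insert hjS]
      simp only [Polynomial.eval_comp, Polynomial.eval_add, Polynomial.eval_X, Polynomial.eval_C]
      have : x + (z j + ∑ i ∈ S, z i) = x + ∑ i ∈ S, z i + z j := by ring
      rw [this]; ring
    rw [Finset.sum_congr rfl h1, ← Finset.sum_add_distrib]
    have := ih (q - q.comp (Polynomial.X + Polynomial.C (z j))) x ?_
    · rw [← this]
      apply Finset.sum_congr rfl
      intro S _
      rw [Polynomial.eval_sub]; ring
    · by_cases hq0 : q = 0
      · simp [hq0]
      have hd : (q.comp (Polynomial.X + Polynomial.C (z j))).degree = q.degree := by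
        rw [← Polynomial.taylor_apply, Polynomial.degree_taylor]
      have hlt := Polynomial.degree_sub_lt_left (p := q) (q := q.comp (Polynomial.X + Polynomial.C (z j)))
        hd.symm hq0 (by rw [← Polynomial.taylor_apply, Polynomial.leadingCoeff_taylor])
      rw [Finset.card_insert_of_notMem hj] at hq
      rw [Polynomial.degree_eq_natDegree hq0] at hlt hq
      refine lt_of_lt_of_le hlt ?_
      norm_cast at hq ⊢
      omega

lemma sum_pow_swap {ι : Type*} [DecidableEq ι] (R : Finset ι) (f : Finset ι → ι → ℚ) :
    ∑ S ∈ R.powerset, ∑ j ∈ R \ S, f S j = ∑ j ∈ R, ∑ S ∈ (R.erase j).powerset, f S j := by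
  apply Finset.sum_comm'
  intro S j
  simp only [Finset.mem_powerset, Finset.mem_sdiff, Finset.subset_erase]
  tauto

/-- Hurwitz-Abel identity, first form -/
lemma abel1 {ι : Type*} [DecidableEq ι] (z : ι → ℚ) (hz : ∀ i, 0 ≤ z i) (x : ℚ) (hx : 0 < x) (r : ℕ) :
    ∀ (R : Finset ι), R.card = r → ∀ y : ℚ,
      ∑ S ∈ R.powerset, x * (x + ∑ i ∈ S, z i) ^ ((S.card : ℤ) - 1) *
        (y + ∑ i ∈ R \ S, z i) ^ (R \ S).card = (x + y + ∑ i ∈ R, z i) ^ R.card := by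
  have hpos : ∀ S : Finset ι, x + ∑ i ∈ S, z i ≠ 0 := fun S => by
    have := Finset.sum_nonneg (s := S) (fun i _ => hz i)
    positivity
  induction r with
  | zero =>
    intro R hR y
    rw [Finset.card_eq_zero] at hR
    subst hR
    simp [hx.ne']
  | succ r ih =>
    intro R hR
    let F : Polynomial ℚ := ∑ S ∈ R.powerset, Polynomial.C (x * (x + ∑ i ∈ S, z i) ^ ((S.card : ℤ) - 1)) *
        (Polynomial.X + Polynomial.C (∑ i ∈ R \ S, z i)) ^ (R \ S).card
        - (Polynomial.X + Polynomial.C (x + ∑ i ∈ R, z i)) ^ R.card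
    have hev : ∀ y, F.eval y = ∑ S ∈ R.powerset, x * (x + ∑ i ∈ S, z i) ^ ((S.card : ℤ) - 1) *
        (y + ∑ i ∈ R \ S, z i) ^ (R \ S).card - (x + y + ∑ i ∈ R, z i) ^ R.card := by
      intro y
      simp only [F, Polynomial.eval_sub, Polynomial.eval_finsetSum, Polynomial.eval_mul,
        Polynomial.eval_C, Polynomial.eval_pow, Polynomial.eval_add, Polynomial.eval_X]
      congr 2
      ring
    have hder : Polynomial.derivative F = 0 := by
      apply Polynomial.funext
      intro y
      simp only [F, Polynomial.derivative_sub, Polynomial.derivative_sum, Polynomial.derivative_mul,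
        Polynomial.derivative_C, Polynomial.derivative_pow, Polynomial.derivative_add,
        Polynomial.derivative_X, Polynomial.eval_sub, Polynomial.eval_finsetSum, Polynomial.eval_mul,
        Polynomial.eval_C, Polynomial.eval_pow, Polynomial.eval_add, Polynomial.eval_X,
        Polynomial.eval_zero, zero_mul, zero_add, add_zero, mul_one]
      have h1 : ∀ S ∈ R.powerset, x * (x + ∑ i ∈ S, z i) ^ ((S.card : ℤ) - 1) *
          (((R \ S).card : ℚ) * (y + ∑ i ∈ R \ S, z i) ^ ((R \ S).card - 1))
          = ∑ j ∈ R \ S, x * (x + ∑ i ∈ S, z i) ^ ((S.card : ℤ) - 1) *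
            ((y + z j) + ∑ i ∈ (R.erase j) \ S, z i) ^ ((R.erase j) \ S).card := by
        intro S _
        refine Eq.symm (Eq.trans (Finset.sum_congr rfl (g := fun j => x * (x + ∑ i ∈ S, z i) ^ ((S.card : ℤ) - 1) *
          (y + ∑ i ∈ R \ S, z i) ^ ((R \ S).card - 1)) ?_) ?_)
        rotate_left
        · rw [Finset.sum_const, nsmul_eq_mul]; ring
        · intro j hj
          have : (R.erase j) \ S = (R \ S).erase j := by
            rw [Finset.erase_sdiff_comm]
          rw [this, Finset.card_erase_of_mem hj, ← Finset.add_sum_erase _ _ hj]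
          ring
      rw [Finset.sum_congr rfl h1, sum_pow_swap R (fun S j => x * (x + ∑ i ∈ S, z i) ^ ((S.card : ℤ) - 1) *
            ((y + z j) + ∑ i ∈ (R.erase j) \ S, z i) ^ ((R.erase j) \ S).card)]
      rw [Finset.sum_congr rfl (g := fun j => (x + y + ∑ i ∈ R, z i) ^ r)]
      · rw [Finset.sum_const, nsmul_eq_mul, hR]
        simp
        ring
      · intro j hj
        have hc : (R.erase j).card = r := by rw [Finset.card_erase_of_mem hj]; omega
        rw [ih _ hc (y + z j), hc, ← Finset.add_sum_erase _ _ hj]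
        ring
    have hconst : ∀ y, F.eval y = F.eval (-(x + ∑ i ∈ R, z i)) := by
      intro y
      have := Polynomial.derivative_eq_zero.1 hder
      rw [Polynomial.eq_C_of_natDegree_eq_zero this]
      simp
    intro y
    rw [← sub_eq_zero, ← hev, hconst, hev, sub_eq_zero]
    have h2 : x + -(x + ∑ i ∈ R, z i) + ∑ i ∈ R, z i = 0 := by ring
    rw [h2, hR, zero_pow (by omega)]
    have h3 := findiff z R (Polynomial.X ^ r) x (by
      rw [Polynomial.degree_X_pow, hR]; norm_cast; omega)
    have h4 : ∀ S ∈ R.powerset, x * (x + ∑ i ∈ S, z i) ^ ((S.card : ℤ) - 1) *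
        (-(x + ∑ i ∈ R, z i) + ∑ i ∈ R \ S, z i) ^ (R \ S).card =
        (x * (-1) ^ R.card) * ((-1 : ℚ) ^ S.card * (Polynomial.X ^ r : Polynomial ℚ).eval (x + ∑ i ∈ S, z i)) := by
      intro S hS
      have hSR := Finset.mem_powerset.1 hS
      have e1 : -(x + ∑ i ∈ R, z i) + ∑ i ∈ R \ S, z i = (-1) * (x + ∑ i ∈ S, z i) := by
        rw [← Finset.sum_sdiff hSR]; ring
      have e2 := Finset.card_sdiff_add_card_eq_card hSR
      rw [e1, mul_pow, ← e2, pow_add]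
      simp only [Polynomial.eval_pow, Polynomial.eval_X]
      have e3 : (x + ∑ i ∈ S, z i) ^ r = (x + ∑ i ∈ S, z i) ^ ((S.card : ℤ) - 1) * (x + ∑ i ∈ S, z i) ^ (R \ S).card := by
        rw [← zpow_natCast, ← zpow_natCast, ← zpow_add₀ (hpos S)]
        congr 1
        omega
      rw [e3]
      have e4 : ((-1 : ℚ) ^ S.card) * (-1) ^ S.card = 1 := by
        rw [← mul_pow]; simp
      linear_combination (-(x * (x + ∑ i ∈ S, z i) ^ ((S.card : ℤ) - 1) * (-1)^(R \ S).card * (x + ∑ i ∈ S, z i) ^ (R \ S).card)) * e4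
    rw [Finset.sum_congr rfl h4, ← Finset.mul_sum, h3, mul_zero]

/-- Hurwitz-Abel identity, second form -/
lemma abel2 {ι : Type*} [DecidableEq ι] (z : ι → ℚ) (hz : ∀ i, 0 ≤ z i) (x y : ℚ) (hx : 0 < x)
    (hy : 0 < y) (R : Finset ι) :
    ∑ S ∈ R.powerset, (x + ∑ i ∈ S, z i) ^ ((S.card : ℤ) - 1) *
        (y + ∑ i ∈ R \ S, z i) ^ (((R \ S).card : ℤ) - 1)
      = (x + y) / (x * y) * (x + y + ∑ i ∈ R, z i) ^ ((R.card : ℤ) - 1) := by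
  have hpos : ∀ S : Finset ι, x + ∑ i ∈ S, z i ≠ 0 := fun S => by
    have := Finset.sum_nonneg (s := S) (fun i _ => hz i)
    positivity
  have hpos' : ∀ S : Finset ι, y + ∑ i ∈ S, z i ≠ 0 := fun S => by
    have := Finset.sum_nonneg (s := S) (fun i _ => hz i)
    positivity
  have hpos'' : ∀ S : Finset ι, x + y + ∑ i ∈ S, z i ≠ 0 := fun S => by
    have := Finset.sum_nonneg (s := S) (fun i _ => hz i)
    positivity
  have key : ∀ S ∈ R.powerset, x * y * ((x + ∑ i ∈ S, z i) ^ ((S.card : ℤ) - 1) *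
        (y + ∑ i ∈ R \ S, z i) ^ (((R \ S).card : ℤ) - 1)) =
      x * (x + ∑ i ∈ S, z i) ^ ((S.card : ℤ) - 1) * (y + ∑ i ∈ R \ S, z i) ^ (R \ S).card
      - ∑ j ∈ R \ S, z j * (x * (x + ∑ i ∈ S, z i) ^ ((S.card : ℤ) - 1) *
            ((y + z j) + ∑ i ∈ (R.erase j) \ S, z i) ^ ((R.erase j) \ S).card) := by
    intro S _
    have e : ∀ j ∈ R \ S, z j * (x * (x + ∑ i ∈ S, z i) ^ ((S.card : ℤ) - 1) *
            ((y + z j) + ∑ i ∈ (R.erase j) \ S, z i) ^ ((R.erase j) \ S).card)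
          = z j * (x * (x + ∑ i ∈ S, z i) ^ ((S.card : ℤ) - 1) *
            (y + ∑ i ∈ R \ S, z i) ^ (((R \ S).card : ℤ) - 1)) := by
      intro j hj
      have : (R.erase j) \ S = (R \ S).erase j := by
        rw [Finset.erase_sdiff_comm]
      have hc := Finset.card_pos.2 ⟨j, hj⟩
      rw [this, Finset.card_erase_of_mem hj, ← Finset.add_sum_erase _ _ hj, ← zpow_natCast,
        Nat.cast_sub hc]
      simp only [Nat.cast_one, add_assoc]
    rw [Finset.sum_congr rfl e, ← Finset.sum_mul]
    have : (y + ∑ i ∈ R \ S, z i) ^ (R \ S).card = (y + ∑ i ∈ R \ S, z i) ^ (((R \ S).card : ℤ) - 1) * (y + ∑ i ∈ R \ S, z i) := by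
      rw [← zpow_add_one₀ (hpos' _), sub_add_cancel, zpow_natCast]
    rw [this]
    ring
  have h := Finset.sum_congr rfl key
  rw [← Finset.mul_sum, Finset.sum_sub_distrib, sum_pow_swap R (fun S j => z j * (x * (x + ∑ i ∈ S, z i) ^ ((S.card : ℤ) - 1) *
            ((y + z j) + ∑ i ∈ (R.erase j) \ S, z i) ^ ((R.erase j) \ S).card)),
    abel1 z hz x hx _ R rfl y] at h
  have e2 : ∀ j ∈ R, ∑ S ∈ (R.erase j).powerset, z j * (x * (x + ∑ i ∈ S, z i) ^ ((S.card : ℤ) - 1) *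
            ((y + z j) + ∑ i ∈ (R.erase j) \ S, z i) ^ ((R.erase j) \ S).card)
       = z j * (x + y + ∑ i ∈ R, z i) ^ ((R.card : ℤ) - 1) := by
    intro j hj
    have hc := Finset.card_pos.2 ⟨j, hj⟩
    rw [← Finset.mul_sum, abel1 z hz x hx _ (R.erase j) rfl (y + z j), Finset.card_erase_of_mem hj,
      ← zpow_natCast, Nat.cast_sub hc, ← Finset.add_sum_erase _ _ hj]
    congr 2
    ring
  rw [Finset.sum_congr rfl e2, ← Finset.sum_mul] at h
  have : (x + y + ∑ i ∈ R, z i) ^ R.card = (x + y + ∑ i ∈ R, z i) ^ ((R.card : ℤ) - 1) * (x + y + ∑ i ∈ R, z i) := by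
    rw [← zpow_add_one₀ (hpos'' _), sub_add_cancel, zpow_natCast]
  rw [this] at h
  field_simp
  linear_combination h

/-- the numbers k^k / k! -/
def cc (k : ℕ) : ℚ := (k : ℚ) ^ k / (k.factorial : ℚ)

/-- the numbers k^(k-1) / k! (zero for k = 0) -/
def tt (k : ℕ) : ℚ := cc k / k

lemma cc_zero : cc 0 = 1 := by simp [cc]
lemma tt_zero : tt 0 = 0 := by simp [tt]
lemma cc_pos (k : ℕ) : 0 < cc k := by
  unfold cc
  rcases Nat.eq_zero_or_pos k with h | h
  · subst h; simp
  · positivity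

lemma mul_tt (k : ℕ) (hk : k ≠ 0) : (k : ℚ) * tt k = cc k := by
  unfold tt; field_simp

lemma conv_tc_aux (N : ℕ) : ∑ b ∈ range (N + 1), tt (b + 1) * cc (N - b) = cc (N + 1) := by
  have h := abel1 (fun _ : ℕ => (1 : ℚ)) (by simp) 1 (by simp) _ (range N) rfl 0
  simp only [Finset.sum_const, nsmul_eq_mul, mul_one, one_mul] at h
  have h2 : ∀ S ∈ (range N).powerset, (1 + (S.card : ℚ)) ^ ((S.card : ℤ) - 1) * (0 + ((range N \ S).card : ℚ)) ^ (range N \ S).card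
      = (fun s : ℕ => (1 + (s : ℚ)) ^ ((s : ℤ) - 1) * ((N - s : ℕ) : ℚ) ^ (N - s)) S.card := by
    intro S hS
    have : (range N \ S).card = N - S.card := by
      rw [Finset.card_sdiff_of_subset (Finset.mem_powerset.1 hS), Finset.card_range]
    simp only [this, zero_add]
  have h2' := Finset.sum_powerset_apply_card (fun s : ℕ => (1 + (s : ℚ)) ^ ((s : ℤ) - 1) * ((N - s : ℕ) : ℚ) ^ (N - s)) (x := range N)
  rw [Finset.sum_congr rfl h2, h2'] at h
  simp only [Finset.card_range, nsmul_eq_mul] at h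
  have h3 : ∀ b ∈ range (N + 1), tt (b + 1) * cc (N - b) =
      (1 / (N.factorial : ℚ)) * ((N.choose b : ℚ) * ((1 + (b : ℚ)) ^ ((b : ℤ) - 1) * ((N - b : ℕ) : ℚ) ^ (N - b))) := by
    intro b hb
    have hb' : b ≤ N := by simp at hb; omega
    have hz : (1 + (b : ℚ)) ^ (b + 1) = (1 + (b : ℚ)) ^ ((b : ℤ) - 1) * (1 + b) ^ 2 := by
      rw [← zpow_natCast, ← zpow_natCast, ← zpow_add₀ (by positivity)]
      congr 1
      push_cast; ring
    rw [Nat.cast_choose ℚ hb']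
    unfold tt cc
    rw [Nat.factorial_succ]
    push_cast
    have hf : (N.factorial : ℚ) ≠ 0 := by positivity
    rw [add_comm (b : ℚ) 1, hz]
    field_simp
  rw [Finset.sum_congr rfl h3, ← Finset.mul_sum, h]
  unfold cc
  rw [Nat.factorial_succ]
  push_cast
  rw [add_zero, add_comm (1 : ℚ)]
  field_simp
  ring

lemma conv_tc (N : ℕ) : ∑ p ∈ antidiagonal N, tt p.1 * cc p.2 = if N = 0 then 0 else cc N := by
  rcases N with _ | N
  · simp [tt_zero]
  · rw [Finset.Nat.sum_antidiagonal_succ, tt_zero, zero_mul, zero_add,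
      Finset.Nat.sum_antidiagonal_eq_sum_range_succ (fun i j => tt (i + 1) * cc j), conv_tc_aux]
    simp

lemma d_mul {A : Type*} [CommRing A] (f g : PowerSeries A) :
    PowerSeries.derivative A (f * g) = f * PowerSeries.derivative A g + g * PowerSeries.derivative A f := by
  rw [Derivation.leibniz]
  simp only [smul_eq_mul]

open Polynomial in
/-- z d/dz -/
noncomputable def th (f : PowerSeries ℚ[X]) : PowerSeries ℚ[X] := PowerSeries.X * PowerSeries.derivative ℚ[X] f

open Polynomial in
lemma coeff_th (f : PowerSeries ℚ[X]) (N : ℕ) : PowerSeries.coeff N (th f) = (N : ℚ[X]) * PowerSeries.coeff N f := by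
  unfold th
  rcases N with _ | N
  · simp
  · rw [PowerSeries.coeff_succ_X_mul, PowerSeries.coeff_derivative]
    push_cast; ring

open Polynomial in
lemma th_mul (f g : PowerSeries ℚ[X]) : th (f * g) = th f * g + f * th g := by
  unfold th
  rw [d_mul]; ring

open Polynomial in
lemma th_sub (f g : PowerSeries ℚ[X]) : th (f - g) = th f - th g := by
  unfold th
  rw [map_sub]; ring

open Polynomial in
lemma th_add (f g : PowerSeries ℚ[X]) : th (f + g) = th f + th g := by
  unfold th
  rw [map_add]; ring

open Polynomial in
lemma th_one : th (1 : PowerSeries ℚ[X]) = 0 := by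
  unfold th
  simp

/-- l c_l c_i / (l+i) -/
def ee (l i : ℕ) : ℚ := l * cc l * cc i / (l + i)

open Polynomial in
noncomputable def sCx : PowerSeries ℚ[X] := PowerSeries.mk fun k => C (cc k) * X ^ k
open Polynomial in
noncomputable def sCy : PowerSeries ℚ[X] := PowerSeries.mk fun k => C (cc k)
open Polynomial in
noncomputable def sU : PowerSeries ℚ[X] := PowerSeries.mk fun k => C (tt k) * X ^ k
open Polynomial in
noncomputable def sV : PowerSeries ℚ[X] := PowerSeries.mk fun k => C (tt k)
open Polynomial in
noncomputable def sE : PowerSeries ℚ[X] := PowerSeries.mk fun N => ∑ p ∈ antidiagonal N, C (ee p.1 p.2) * X ^ p.2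
open Polynomial in
noncomputable def sD : PowerSeries ℚ[X] := PowerSeries.mk fun N => C (tt N) * ∑ k ∈ range N, X ^ k
open Polynomial in
noncomputable def sW : PowerSeries ℚ[X] := PowerSeries.mk fun N => C (cc N) * ∑ k ∈ range N, X ^ k

lemma one_coeff (N : ℕ) : PowerSeries.coeff N (1 : PowerSeries (Polynomial ℚ)) = if N = 0 then 1 else 0 :=
  PowerSeries.coeff_one N

lemma th_U : th sU = sCx - 1 := by
  ext1 N
  rw [coeff_th, map_sub, one_coeff, sU, sCx, PowerSeries.coeff_mk, PowerSeries.coeff_mk]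
  rcases eq_or_ne N 0 with h | h
  · subst h; simp [cc_zero]
  · rw [if_neg h, ← mul_tt N h, Polynomial.C_mul, sub_zero]; simp; ring

lemma th_V : th sV = sCy - 1 := by
  ext1 N
  rw [coeff_th, map_sub, one_coeff, sV, sCy, PowerSeries.coeff_mk, PowerSeries.coeff_mk]
  rcases eq_or_ne N 0 with h | h
  · subst h; simp [cc_zero]
  · rw [if_neg h, ← mul_tt N h, Polynomial.C_mul, sub_zero]; simp

lemma UC : sU * sCx = sCx - 1 := by
  ext1 N
  rw [PowerSeries.coeff_mul, map_sub, one_coeff, sU, sCx]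
  simp only [PowerSeries.coeff_mk]
  have : ∀ p ∈ antidiagonal N, Polynomial.C (tt p.1) * Polynomial.X ^ p.1 * (Polynomial.C (cc p.2) * Polynomial.X ^ p.2)
      = Polynomial.C (tt p.1 * cc p.2) * (Polynomial.X : Polynomial ℚ) ^ N := by
    intro p hp
    rw [← mem_antidiagonal.1 hp, pow_add, Polynomial.C_mul]; ring
  rw [Finset.sum_congr rfl this, ← Finset.sum_mul, ← map_sum, conv_tc]
  split_ifs with h
  · subst h; simp [cc_zero]
  · simp

lemma VC : sV * sCy = sCy - 1 := by
  ext1 N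
  rw [PowerSeries.coeff_mul, map_sub, one_coeff, sV, sCy]
  simp only [PowerSeries.coeff_mk]
  have : ∀ p ∈ antidiagonal N, Polynomial.C (tt p.1) * (Polynomial.C (cc p.2) )
      = Polynomial.C (tt p.1 * cc p.2)  := by
    intro p hp
    rw [Polynomial.C_mul]
  rw [Finset.sum_congr rfl this, ← map_sum, conv_tc]
  split_ifs with h
  · subst h; simp [cc_zero]
  · simp

lemma th_Cy : th sCy = sV * sCy ^ 3 := by
  have h := congrArg th VC
  rw [th_mul, th_sub, th_one, th_V] at h
  have h2 := VC
  linear_combination -(sCy) * h + (th sCy - sCy ^ 2 ) * h2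

lemma th_E : th sE = th sCy * sCx := by
  ext1 N
  rw [coeff_th, PowerSeries.coeff_mul]
  simp only [coeff_th, sE, sCx, sCy, PowerSeries.coeff_mk]
  rw [Finset.mul_sum]
  apply Finset.sum_congr rfl
  intro p hp
  have hp' := mem_antidiagonal.1 hp
  have : (N : ℚ) * ee p.1 p.2 = p.1 * cc p.1 * cc p.2 := by
    rw [← hp']
    unfold ee
    rcases eq_or_ne (p.1 + p.2) 0 with h | h
    · have : p.1 = 0 := by omega
      simp [h, this]
    · have : (p.1 : ℚ) + p.2 ≠ 0 := by exact_mod_cast h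
      push_cast
      field_simp
  have h3 := congrArg (Polynomial.C) this
  simp only [Polynomial.C_mul] at h3
  simp at h3
  linear_combination Polynomial.X ^ p.2 * h3

lemma th_D : th sD = sW := by
  ext1 N
  rw [coeff_th, sD, sW, PowerSeries.coeff_mk, PowerSeries.coeff_mk]
  rcases eq_or_ne N 0 with h | h
  · subst h; simp
  · rw [← mul_tt N h, Polynomial.C_mul]; simp; ring

lemma D_eq : PowerSeries.C (Polynomial.X - 1 : Polynomial ℚ) * sD = sU - sV := by
  ext1 N
  rw [PowerSeries.coeff_C_mul, map_sub]
  simp only [sD, sU, sV, PowerSeries.coeff_mk]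
  have := mul_geom_sum (Polynomial.X : Polynomial ℚ) N
  linear_combination Polynomial.C (tt N) * this

lemma W_eq' : PowerSeries.C (Polynomial.X - 1 : Polynomial ℚ) * sW = sCx - sCy := by
  ext1 N
  rw [PowerSeries.coeff_C_mul, map_sub]
  simp only [sW, sCx, sCy, PowerSeries.coeff_mk]
  have := mul_geom_sum (Polynomial.X : Polynomial ℚ) N
  linear_combination Polynomial.C (cc N) * this

lemma UV : sCx - sCy = (sU - sV) * (sCx * sCy) := by
  linear_combination sCy * (-UC) + sCx * VC

lemma W_eq : sW = sD * (sCx * sCy) := by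
  have h0 : PowerSeries.C (Polynomial.X - 1 : Polynomial ℚ) ≠ 0 := by
    intro h
    have h1 : (Polynomial.X - 1 : Polynomial ℚ) = 0 := by
      apply PowerSeries.C_injective
      rw [h, map_zero]
    have := congrArg (Polynomial.eval 0) h1
    simp at this
  apply mul_left_cancel₀ h0
  rw [W_eq', UV, ← D_eq]; ring

lemma key0 : sE * (sU - sV) + sV * sCy - sD = 0 := by
  set Z := sE * (sU - sV) + sV * sCy - sD with hZ
  have hth : th Z = sCx * sCy * Z := by
    rw [hZ, th_sub, th_add, th_mul, th_sub, th_E, th_U, th_V, th_D, W_eq, VC, th_sub, th_one, th_Cy]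
    have e1 := UC
    have e2 := VC
    have e3 := UV
    linear_combination sE * e3 + sCy^3 * sV * e1 - sV * sCy ^ 2 * sCx * e2 + (sCx * sCy) * e2
  have hc : ∀ N, PowerSeries.coeff N Z = 0 := by
    intro N
    induction N using Nat.strong_induction_on with
    | _ N ih =>
      by_cases h2 : N < 2
      · interval_cases N
        · simp [hZ, sE, sU, sV, sCy, sD, tt_zero, tt, cc, ee, PowerSeries.coeff_zero_eq_constantCoeff, PowerSeries.coeff_mul]
        · simp [hZ, sE, sU, sV, sCy, sD, PowerSeries.coeff_mul, Finset.Nat.antidiagonal_succ, tt, cc, ee]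
      · have h := congrArg (PowerSeries.coeff N) hth
        rw [coeff_th, PowerSeries.coeff_mul, Finset.sum_eq_single (0, N)] at h
        · have h1 : PowerSeries.coeff 0 (sCx * sCy) = 1 := by
            simp [sCx, sCy, cc_zero, PowerSeries.coeff_mul]
          simp only [h1] at h
          have h3 : ((N - 1 : ℕ) : Polynomial ℚ) * PowerSeries.coeff N Z = 0 := by
            rw [Nat.cast_sub (by omega)]
            push_cast
            linear_combination h
          rcases mul_eq_zero.1 h3 with h4 | h4
          · exfalso
            have : N - 1 = 0 := by exact_mod_cast h4
            omega
          · exact h4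
        · intro p hp hne
          have hp' := mem_antidiagonal.1 hp
          rw [ih p.2, mul_zero]
          rcases p with ⟨a, b⟩
          simp at hne hp' ⊢
          rcases Nat.eq_zero_or_pos a with h0 | h0
          · exact absurd (by omega) (hne h0)
          · omega
        · simp
  ext1 N
  rw [hc]; simp

lemma key1 : sE * sCx - sE * sCy + sCx * sCy * sCy - sCx * sCy = sW := by
  have h := key0
  rw [W_eq]
  linear_combination sCx * sCy * h + sE * UV - (sCx * sCy) * VC

lemma coeff_E (N k : ℕ) : (PowerSeries.coeff N sE).coeff k = if k ≤ N then ee (N - k) k else 0 := by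
  rw [sE, PowerSeries.coeff_mk, Polynomial.finsetSum_coeff]
  simp only [Polynomial.coeff_C_mul_X_pow]
  split_ifs with h
  · rw [Finset.sum_eq_single (N - k, k)]
    · simp
    · intro p hp hne
      rw [if_neg]
      intro hk
      apply hne
      have := mem_antidiagonal.1 hp
      ext <;> simp <;> omega
    · intro hn; exfalso; apply hn; simp; omega
  · apply Finset.sum_eq_zero
    intro p hp
    have := mem_antidiagonal.1 hp
    rw [if_neg]; omega

lemma coeff_ECx (k l : ℕ) : (PowerSeries.coeff (k + l) (sE * sCx)).coeff k = ∑ i ∈ range (k + 1), ee l i * cc (k - i) := by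
  rw [PowerSeries.coeff_mul, Polynomial.finsetSum_coeff]
  simp only [sCx, PowerSeries.coeff_mk]
  have : ∀ p ∈ antidiagonal (k + l), (PowerSeries.coeff p.1 sE * (Polynomial.C (cc p.2) * Polynomial.X ^ p.2)).coeff k
     = if p.2 ≤ k then ee l (k - p.2) * cc p.2 else 0 := by
    intro p hp
    have hp' := mem_antidiagonal.1 hp
    rw [← mul_assoc, Polynomial.coeff_mul_X_pow']
    split_ifs with h
    · rw [Polynomial.coeff_mul_C, coeff_E, if_pos (by omega)]
      congr 2; omega
    · rfl
  rw [Finset.sum_congr rfl this, ← Finset.Nat.sum_antidiagonal_swap]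
  simp only [Prod.snd_swap]
  rw [Finset.Nat.sum_antidiagonal_eq_sum_range_succ (fun i _ => if i ≤ k then ee l (k - i) * cc i else 0),
    ← Finset.sum_range_reflect (fun i => ee l i * cc (k - i))]
  rw [← Finset.sum_filter]
  apply Finset.sum_congr
  · ext i; simp; omega
  · intro i hi
    simp at hi
    congr 2 <;> omega

lemma coeff_ECy (k l : ℕ) : (PowerSeries.coeff (k + l) (sE * sCy)).coeff k = ∑ j ∈ range (l + 1), ee j k * cc (l - j) := by
  rw [PowerSeries.coeff_mul, Polynomial.finsetSum_coeff]
  simp only [sCy, PowerSeries.coeff_mk, Polynomial.coeff_mul_C, coeff_E]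
  rw [Finset.Nat.sum_antidiagonal_eq_sum_range_succ (fun i j => (if k ≤ i then ee (i - k) k else 0) * cc j),
    show (k + l).succ = k + (l + 1) by omega, Finset.sum_range_add]
  rw [Finset.sum_eq_zero, zero_add]
  · apply Finset.sum_congr rfl
    intro j hj
    rw [if_pos (by omega)]
    congr 2 <;> omega
  · intro i hi
    simp at hi
    rw [if_neg (by omega), zero_mul]

lemma coeff_CxCy (N k : ℕ) : (PowerSeries.coeff N (sCx * sCy)).coeff k = if k ≤ N then cc k * cc (N - k) else 0 := by
  rw [PowerSeries.coeff_mul, Polynomial.finsetSum_coeff]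
  simp only [sCx, sCy, PowerSeries.coeff_mk, Polynomial.coeff_mul_C, Polynomial.coeff_C_mul_X_pow]
  split_ifs with h
  · rw [Finset.sum_eq_single (k, N - k)]
    · simp
    · intro p hp hne
      rw [if_neg, zero_mul]
      intro hk
      apply hne
      have := mem_antidiagonal.1 hp
      ext <;> simp <;> omega
    · intro hn; exfalso; apply hn; simp; omega
  · apply Finset.sum_eq_zero
    intro p hp
    have := mem_antidiagonal.1 hp
    rw [if_neg, zero_mul]; omega

lemma coeff_CxCyCy (k l : ℕ) : (PowerSeries.coeff (k + l) (sCx * sCy * sCy)).coeff k = ∑ j ∈ range (l + 1), cc k * cc j * cc (l - j) := by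
  rw [PowerSeries.coeff_mul, Polynomial.finsetSum_coeff]
  have hcy : ∀ j, PowerSeries.coeff j sCy = Polynomial.C (cc j) := by intro j; simp [sCy]
  simp only [hcy, Polynomial.coeff_mul_C, coeff_CxCy]
  rw [Finset.Nat.sum_antidiagonal_eq_sum_range_succ (fun i j => (if k ≤ i then cc k * cc (i - k) else 0) * cc j),
    show (k + l).succ = k + (l + 1) by omega, Finset.sum_range_add]
  rw [Finset.sum_eq_zero, zero_add]
  · apply Finset.sum_congr rfl
    intro j hj
    rw [if_pos (by omega)]
    congr 2
    · congr 1; omega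
    · omega
  · intro i hi
    simp at hi
    rw [if_neg (by omega), zero_mul]

lemma key2 (k l : ℕ) (hk : 0 < k) (hl : 0 < l) :
    cc (k + l) + cc k * cc l = ∑ i ∈ range (k + 1), ee l i * cc (k - i) + ∑ j ∈ range (l + 1), ee k j * cc (l - j) := by
  have h := congrArg (fun f => (PowerSeries.coeff (k + l) f).coeff k) key1
  simp only [map_sub, map_add, Polynomial.coeff_sub, Polynomial.coeff_add, coeff_ECx, coeff_ECy,
    coeff_CxCy, coeff_CxCyCy] at h
  rw [sW, PowerSeries.coeff_mk, Polynomial.coeff_C_mul, Polynomial.finsetSum_coeff] at h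
  simp only [Polynomial.coeff_X_pow] at h
  rw [Finset.sum_ite_eq, if_pos (by omega), if_pos (by simp; omega), Nat.add_sub_cancel_left] at h
  have h2 : ∀ j ∈ range (l + 1), ee k j * cc (l - j) = cc k * cc j * cc (l - j) - ee j k * cc (l - j) := by
    intro j _
    have : (k : ℚ) + j ≠ 0 := by positivity
    have : (j : ℚ) + k ≠ 0 := by positivity
    unfold ee
    field_simp
    ring
  rw [Finset.sum_congr rfl h2, Finset.sum_sub_distrib]
  linear_combination -h

/-- the weights k * k^k / k! -/
def ph (k : ℕ) : ℚ := k * cc k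

lemma ph_pos (k : ℕ) (hk : 0 < k) : 0 < ph k := by
  unfold ph; have := cc_pos k; positivity

lemma id1 (a : ℕ) (ha : 0 < a) : ∑ b ∈ Ico 1 a, cc b * cc (a - b) / ((a - b : ℕ) : ℚ) = cc a * (1 - 1 / a) := by
  obtain ⟨N, rfl⟩ : ∃ N, a = N + 1 := ⟨a - 1, by omega⟩
  have h := conv_tc_aux N
  rw [Finset.sum_range_succ, Nat.sub_self, cc_zero, ← Finset.sum_range_reflect] at h
  rw [Finset.sum_Ico_eq_sum_range]
  have : ∀ i ∈ range (N + 1 - 1), cc (1 + i) * cc (N + 1 - (1 + i)) / ((N + 1 - (1 + i) : ℕ) : ℚ) =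
      tt (N - 1 - i + 1) * cc (N - (N - 1 - i)) := by
    intro i hi
    simp at hi
    unfold tt
    rw [show N - 1 - i + 1 = N + 1 - (1 + i) by omega, show N - (N - 1 - i) = 1 + i by omega]
    ring
  rw [Finset.sum_congr rfl this]
  simp only [Nat.add_sub_cancel]
  have h3 : tt (N + 1) = cc (N + 1) / ((N + 1 : ℕ) : ℚ) := rfl
  rw [h3] at h
  linear_combination h

lemma id2 (k l : ℕ) (hk : 0 < k) (hl : 0 < l) :
    cc (k + l) = 2 * cc k * cc l + l * cc l * ∑ b ∈ Ico 1 k, cc b * cc (k - b) / (((k - b : ℕ) : ℚ) + l)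
      + k * cc k * ∑ b ∈ Ico 1 l, cc b * cc (l - b) / (((l - b : ℕ) : ℚ) + k) := by
  have h := key2 k l hk hl
  have aux : ∀ k l : ℕ, 0 < k → 0 < l → ∑ i ∈ range (k + 1), ee l i * cc (k - i) =
      cc l * cc k + l * cc l * cc k / (l + k) + l * cc l * ∑ b ∈ Ico 1 k, cc b * cc (k - b) / (((k - b : ℕ) : ℚ) + l) := by
    intro k l hk hl
    obtain ⟨N, rfl⟩ : ∃ N, k = N + 1 := ⟨k - 1, by omega⟩
    rw [Finset.sum_range_succ, Finset.sum_range_succ', Finset.sum_Ico_eq_sum_range]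
    simp only [Nat.add_sub_cancel]
    rw [← Finset.sum_range_reflect, Finset.mul_sum]
    have e : ∀ j ∈ range N, ee l (N - 1 - j + 1) * cc (N + 1 - (N - 1 - j + 1)) =
      l * cc l * (cc (1 + j) * cc (N + 1 - (1 + j)) / (((N + 1 - (1 + j) : ℕ) : ℚ) + l)) := by
      intro j hj
      simp at hj
      rw [show N - 1 - j + 1 = N + 1 - (1 + j) by omega, show N + 1 - (N + 1 - (1 + j)) = 1 + j by omega]
      unfold ee
      ring
    rw [Finset.sum_congr rfl e]
    have hl' : (l : ℚ) ≠ 0 := by positivity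
    simp [ee, cc_zero]
    field_simp
    ring
  rw [aux k l hk hl, aux l k hl hk] at h
  have h4 : (l : ℚ) * cc l * cc k / (l + k) + k * cc k * cc l / (k + l) = cc k * cc l := by
    have : (k : ℚ) + l ≠ 0 := by positivity
    rw [add_comm (l : ℚ) k]
    field_simp
    ring
  linear_combination h + h4

lemma G_eq {ι : Type*} [DecidableEq ι] (z : ι → ℚ) (hz : ∀ i, 0 ≤ z i) (x y : ℚ) (hx : 0 < x)
    (hy : 0 < y) (R : Finset ι) :
    ∑ S ∈ R.powerset, (x + ∑ i ∈ S, z i) ^ ((S.card : ℤ) - 1) *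
        (y + ∑ i ∈ R \ S, z i) ^ (((R \ S).card : ℤ) - 2)
      = 1 / y * ((x + y) / (x * y) * (x + y + ∑ i ∈ R, z i) ^ ((R.card : ℤ) - 1)
        - ∑ j ∈ R, z j * (x + y + z j) / (x * (y + z j)) * (x + y + ∑ i ∈ R, z i) ^ ((R.card : ℤ) - 2)) := by
  have hpos' : ∀ S : Finset ι, y + ∑ i ∈ S, z i ≠ 0 := fun S => by
    have := Finset.sum_nonneg (s := S) (fun i _ => hz i)
    positivity
  have key : ∀ S ∈ R.powerset, y * ((x + ∑ i ∈ S, z i) ^ ((S.card : ℤ) - 1) *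
        (y + ∑ i ∈ R \ S, z i) ^ (((R \ S).card : ℤ) - 2)) =
      (x + ∑ i ∈ S, z i) ^ ((S.card : ℤ) - 1) * (y + ∑ i ∈ R \ S, z i) ^ (((R \ S).card : ℤ) - 1)
      - ∑ j ∈ R \ S, z j * ((x + ∑ i ∈ S, z i) ^ ((S.card : ℤ) - 1) *
            ((y + z j) + ∑ i ∈ (R.erase j) \ S, z i) ^ ((((R.erase j) \ S).card : ℤ) - 1)) := by
    intro S _
    have e : ∀ j ∈ R \ S, z j * ((x + ∑ i ∈ S, z i) ^ ((S.card : ℤ) - 1) *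
            ((y + z j) + ∑ i ∈ (R.erase j) \ S, z i) ^ ((((R.erase j) \ S).card : ℤ) - 1))
          = z j * ((x + ∑ i ∈ S, z i) ^ ((S.card : ℤ) - 1) *
            (y + ∑ i ∈ R \ S, z i) ^ (((R \ S).card : ℤ) - 2)) := by
      intro j hj
      have : (R.erase j) \ S = (R \ S).erase j := by
        rw [Finset.erase_sdiff_comm]
      have hc := Finset.card_pos.2 ⟨j, hj⟩
      rw [this, Finset.card_erase_of_mem hj, ← Finset.add_sum_erase _ _ hj,
        Nat.cast_sub hc]
      simp only [Nat.cast_one, add_assoc]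
      congr 3
      ring
    rw [Finset.sum_congr rfl e, ← Finset.sum_mul]
    have : (y + ∑ i ∈ R \ S, z i) ^ (((R \ S).card : ℤ) - 1) = (y + ∑ i ∈ R \ S, z i) ^ (((R \ S).card : ℤ) - 2) * (y + ∑ i ∈ R \ S, z i) := by
      rw [← zpow_add_one₀ (hpos' _)]
      congr 1; ring
    rw [this]
    ring
  have h := Finset.sum_congr rfl key
  rw [← Finset.mul_sum, Finset.sum_sub_distrib, sum_pow_swap R (fun S j => z j * ((x + ∑ i ∈ S, z i) ^ ((S.card : ℤ) - 1) *
            ((y + z j) + ∑ i ∈ (R.erase j) \ S, z i) ^ ((((R.erase j) \ S).card : ℤ) - 1))),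
    abel2 z hz x y hx hy R] at h
  have e2 : ∀ j ∈ R, ∑ S ∈ (R.erase j).powerset, z j * ((x + ∑ i ∈ S, z i) ^ ((S.card : ℤ) - 1) *
            ((y + z j) + ∑ i ∈ (R.erase j) \ S, z i) ^ ((((R.erase j) \ S).card : ℤ) - 1))
       = z j * (x + y + z j) / (x * (y + z j)) * (x + y + ∑ i ∈ R, z i) ^ ((R.card : ℤ) - 2) := by
    intro j hj
    have hc := Finset.card_pos.2 ⟨j, hj⟩
    rw [← Finset.mul_sum, abel2 z hz x (y + z j) hx (by have := hz j; positivity) (R.erase j), Finset.card_erase_of_mem hj,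
      Nat.cast_sub hc, ← Finset.add_sum_erase _ _ hj]
    have e3 : x + (y + z j) + ∑ i ∈ R.erase j, z i = x + y + (z j + ∑ i ∈ R.erase j, z i) := by ring
    have e4 : ((R.card : ℤ) - (1 : ℕ) - 1) = (R.card : ℤ) - 2 := by push_cast; ring
    rw [e3, e4]
    ring
  rw [Finset.sum_congr rfl e2] at h
  rw [← h]
  field_simp

lemma n_inner {ι : Type*} [DecidableEq ι] (z : ι → ℚ) (hz : ∀ i, 0 ≤ z i) (x y : ℚ) (hx : 0 < x)
    (hy : 0 < y) (R : Finset ι) :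
    (x + y + ∑ i ∈ R, z i) * ∑ S ∈ R.powerset, (x + ∑ i ∈ S, z i) ^ ((S.card : ℤ) - 2) *
        (y + ∑ i ∈ R \ S, z i) ^ (((R \ S).card : ℤ) - 2) =
    ∑ S ∈ R.powerset, (x + ∑ i ∈ S, z i) ^ ((S.card : ℤ) - 1) *
        (y + ∑ i ∈ R \ S, z i) ^ (((R \ S).card : ℤ) - 2) +
    ∑ S ∈ R.powerset, (y + ∑ i ∈ S, z i) ^ ((S.card : ℤ) - 1) *
        (x + ∑ i ∈ R \ S, z i) ^ (((R \ S).card : ℤ) - 2) := by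
  have hswap : ∑ S ∈ R.powerset, (y + ∑ i ∈ S, z i) ^ ((S.card : ℤ) - 1) *
        (x + ∑ i ∈ R \ S, z i) ^ (((R \ S).card : ℤ) - 2) =
      ∑ S ∈ R.powerset, (x + ∑ i ∈ S, z i) ^ ((S.card : ℤ) - 2) *
        (y + ∑ i ∈ R \ S, z i) ^ (((R \ S).card : ℤ) - 1) := by
    refine Finset.sum_nbij' (fun S => R \ S) (fun S => R \ S) ?_ ?_ ?_ ?_ ?_
    · intro S _; simp
    · intro S _; simp
    · intro S hS; simpa using hS
    · intro S hS; simpa using hS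
    · intro S hS
      rw [Finset.sdiff_sdiff_eq_self (Finset.mem_powerset.1 hS), mul_comm]
  rw [hswap, ← Finset.sum_add_distrib, Finset.mul_sum]
  apply Finset.sum_congr rfl
  intro S hS
  have h1 : x + ∑ i ∈ S, z i ≠ 0 := by
    have := Finset.sum_nonneg (s := S) (fun i _ => hz i)
    positivity
  have h2 : y + ∑ i ∈ R \ S, z i ≠ 0 := by
    have := Finset.sum_nonneg (s := R \ S) (fun i _ => hz i)
    positivity
  have e1 : (x + ∑ i ∈ S, z i) ^ ((S.card : ℤ) - 1) = (x + ∑ i ∈ S, z i) ^ ((S.card : ℤ) - 2) * (x + ∑ i ∈ S, z i) := by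
    rw [← zpow_add_one₀ h1]; congr 1; ring
  have e2 : (y + ∑ i ∈ R \ S, z i) ^ (((R \ S).card : ℤ) - 1) = (y + ∑ i ∈ R \ S, z i) ^ (((R \ S).card : ℤ) - 2) * (y + ∑ i ∈ R \ S, z i) := by
    rw [← zpow_add_one₀ h2]; congr 1; ring
  rw [e1, e2, ← Finset.sum_sdiff (Finset.mem_powerset.1 hS)]
  ring

/-- S(a,l) -/
def SS (a l : ℕ) : ℚ := ∑ b ∈ Ico 1 a, cc b * cc (a - b) / (((a - b : ℕ) : ℚ) + l)

/-- sum over distributions of the remaining cycles -/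
def inner {ι : Type*} [DecidableEq ι] (z : ι → ℕ) (R : Finset ι) (x y : ℕ) : ℚ :=
  ∑ S ∈ R.powerset, ((x : ℚ) + ∑ i ∈ S, (z i : ℚ)) ^ ((S.card : ℤ) - 2) *
        ((y : ℚ) + ∑ i ∈ R \ S, (z i : ℚ)) ^ (((R \ S).card : ℤ) - 2)

lemma cut_sum {ι : Type*} [DecidableEq ι] (z : ι → ℕ) (R : Finset ι) (a : ℕ) (ha : 0 < a) :
    (a : ℚ) * ∑ b ∈ Ico 1 a, ph b * ph (a - b) / ph a *
      (inner z R b (a - b) / ((a : ℚ) + ∑ i ∈ R, (z i : ℚ)) ^ ((R.card : ℤ) - 2))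
     = 2 * ((a : ℚ) - 1) - 2 / ((a : ℚ) + ∑ i ∈ R, (z i : ℚ)) *
        ∑ j ∈ R, (z j : ℚ) * (a + z j) * SS a (z j) / cc a := by
  set n : ℚ := (a : ℚ) + ∑ i ∈ R, (z i : ℚ) with hn
  have hn0 : 0 < n := by
    have := Finset.sum_nonneg (s := R) (f := fun i => (z i : ℚ)) (fun i _ => by positivity)
    positivity
  have hca := cc_pos a
  let G : ℕ → ℕ → ℚ := fun x y => ∑ S ∈ R.powerset, ((x : ℚ) + ∑ i ∈ S, (z i : ℚ)) ^ ((S.card : ℤ) - 1) *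
        ((y : ℚ) + ∑ i ∈ R \ S, (z i : ℚ)) ^ (((R \ S).card : ℤ) - 2)
  have hin : ∀ b ∈ Ico 1 a, inner z R b (a - b) = (G b (a - b) + G (a - b) b) / n := by
    intro b hb
    simp only [Finset.mem_Ico] at hb
    have hb1 : (0 : ℚ) < b := by exact_mod_cast (by omega : 0 < b)
    have hb2 : (0 : ℚ) < ((a - b : ℕ) : ℚ) := by exact_mod_cast (by omega : 0 < a - b)
    have := n_inner (fun i => (z i : ℚ)) (fun i => by positivity) b ((a - b : ℕ) : ℚ) hb1 hb2 R
    have e : (b : ℚ) + ((a - b : ℕ) : ℚ) = a := by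
      rw [Nat.cast_sub (by omega)]; ring
    rw [e] at this
    rw [eq_div_iff hn0.ne', mul_comm]
    exact this
  have hG : ∀ b ∈ Ico 1 a, ph b * ph (a - b) * G b (a - b) = n ^ ((R.card : ℤ) - 2) *
      (a * n * (cc b * cc (a - b) / ((a - b : ℕ) : ℚ)) -
        ∑ j ∈ R, (z j : ℚ) * (a + z j) * (cc b * cc (a - b) / (((a - b : ℕ) : ℚ) + z j))) := by
    intro b hb
    simp only [Finset.mem_Ico] at hb
    have hb1 : (0 : ℚ) < b := by exact_mod_cast (by omega : 0 < b)
    have hb2 : (0 : ℚ) < ((a - b : ℕ) : ℚ) := by exact_mod_cast (by omega : 0 < a - b)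
    have h := G_eq (fun i => (z i : ℚ)) (fun i => by positivity) b ((a - b : ℕ) : ℚ) hb1 hb2 R
    have e : (b : ℚ) + ((a - b : ℕ) : ℚ) = a := by
      rw [Nat.cast_sub (by omega)]; ring
    simp only [e] at h
    rw [← hn] at h
    have e2 : n ^ ((R.card : ℤ) - 1) = n ^ ((R.card : ℤ) - 2) * n := by
      rw [← zpow_add_one₀ hn0.ne']; congr 1; ring
    change ph b * ph (a - b) * (∑ S ∈ R.powerset, _) = _
    rw [h, e2]
    have e3 : ∑ j ∈ R, (z j : ℚ) * (a + z j) / (b * (((a - b : ℕ) : ℚ) + z j)) * n ^ ((R.card : ℤ) - 2)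
       = n ^ ((R.card : ℤ) - 2) / b * ∑ j ∈ R, (z j : ℚ) * (a + z j) / (((a - b : ℕ) : ℚ) + z j) := by
      rw [Finset.mul_sum]
      apply Finset.sum_congr rfl
      intro j _
      have : ((a - b : ℕ) : ℚ) + z j ≠ 0 := by positivity
      field_simp
    have e4 : ∑ j ∈ R, (z j : ℚ) * (a + z j) * (cc b * cc (a - b) / (((a - b : ℕ) : ℚ) + z j))
       = cc b * cc (a - b) * ∑ j ∈ R, (z j : ℚ) * (a + z j) / (((a - b : ℕ) : ℚ) + z j) := by
      rw [Finset.mul_sum]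
      apply Finset.sum_congr rfl
      intro j _
      ring
    rw [e3, e4]
    unfold ph
    field_simp
  have hsym : ∑ b ∈ Ico 1 a, ph b * ph (a - b) * G (a - b) b = ∑ b ∈ Ico 1 a, ph b * ph (a - b) * G b (a - b) := by
    refine Finset.sum_nbij' (fun b => a - b) (fun b => a - b) ?_ ?_ ?_ ?_ ?_
    all_goals intro b hb; simp only [Finset.mem_Ico] at hb ⊢
    · omega
    · omega
    · omega
    · omega
    · rw [show a - (a - b) = b by omega]; ring
  have h1 : ∑ b ∈ Ico 1 a, ph b * ph (a - b) / ph a * (inner z R b (a - b) / n ^ ((R.card : ℤ) - 2))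
      = 2 / (ph a * n * n ^ ((R.card : ℤ) - 2)) * ∑ b ∈ Ico 1 a, ph b * ph (a - b) * G b (a - b) := by
    have : ∀ b ∈ Ico 1 a, ph b * ph (a - b) / ph a * (inner z R b (a - b) / n ^ ((R.card : ℤ) - 2)) =
        1 / (ph a * n * n ^ ((R.card : ℤ) - 2)) * (ph b * ph (a - b) * G b (a - b) + ph b * ph (a - b) * G (a - b) b) := by
      intro b hb
      rw [hin b hb]
      have := (ph_pos a ha).ne'
      have h3 : n ^ ((R.card : ℤ) - 2) ≠ 0 := by positivity
      field_simp
    rw [Finset.sum_congr rfl this, ← Finset.mul_sum, Finset.sum_add_distrib, hsym]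
    ring
  rw [h1, Finset.sum_congr rfl hG, ← Finset.mul_sum, Finset.sum_sub_distrib, ← Finset.mul_sum, id1 a ha,
    Finset.sum_comm]
  have h2 : ∑ j ∈ R, ∑ b ∈ Ico 1 a, (z j : ℚ) * (a + z j) * (cc b * cc (a - b) / (((a - b : ℕ) : ℚ) + z j))
      = cc a * ∑ j ∈ R, (z j : ℚ) * (a + z j) * SS a (z j) / cc a := by
    rw [Finset.mul_sum]
    apply Finset.sum_congr rfl
    intro j _
    rw [← Finset.mul_sum]
    change _ * SS a (z j) = _
    field_simp
  rw [h2]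
  unfold ph
  have h3 : n ^ ((R.card : ℤ) - 2) ≠ 0 := by positivity
  have ha' : (a : ℚ) ≠ 0 := by positivity
  field_simp

lemma sum_erase_comm {ι : Type*} [DecidableEq ι] (I : Finset ι) (f : ι → ι → ℚ) :
    ∑ i ∈ I, ∑ j ∈ I.erase i, f i j = ∑ i ∈ I, ∑ j ∈ I.erase i, f j i := by
  apply Finset.sum_comm'
  intro i j
  simp only [Finset.mem_erase]
  tauto

lemma block_id {ι : Type*} [DecidableEq ι] (I : Finset ι) (hI : I.Nonempty) (z : ι → ℕ) (hz : ∀ i ∈ I, 0 < z i) :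
    ∑ i ∈ I, ∑ j ∈ I.erase i, (z i : ℚ) * z j * (ph (z i + z j) / (ph (z i) * ph (z j)) * (1 / ∑ i ∈ I, (z i : ℚ)))
    + ∑ i ∈ I, (z i : ℚ) * ∑ b ∈ Ico 1 (z i), ph b * ph (z i - b) / ph (z i) *
      (inner z (I.erase i) b (z i - b) / (∑ i ∈ I, (z i : ℚ)) ^ ((I.card : ℤ) - 3))
    = 2 * (∑ i ∈ I, (z i : ℚ) + I.card - 2) := by
  set n : ℚ := ∑ i ∈ I, (z i : ℚ) with hn
  have hn0 : 0 < n := by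
    apply Finset.sum_pos _ hI
    intro i hi
    exact_mod_cast hz i hi
  have hA : ∀ i ∈ I, (z i : ℚ) * ∑ b ∈ Ico 1 (z i), ph b * ph (z i - b) / ph (z i) *
      (inner z (I.erase i) b (z i - b) / n ^ ((I.card : ℤ) - 3)) =
      2 * ((z i : ℚ) - 1) - 2 / n * ∑ j ∈ I.erase i, (z j : ℚ) * (z i + z j) * SS (z i) (z j) / cc (z i) := by
    intro i hi
    have h := cut_sum z (I.erase i) (z i) (hz i hi)
    have e : (z i : ℚ) + ∑ j ∈ I.erase i, (z j : ℚ) = n := Finset.add_sum_erase _ (fun j => (z j : ℚ)) hi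
    have hc := Finset.card_pos.2 ⟨i, hi⟩
    rw [e, Finset.card_erase_of_mem hi, Nat.cast_sub hc] at h
    have e2 : (I.card : ℤ) - (1 : ℕ) - 2 = (I.card : ℤ) - 3 := by push_cast; ring
    rw [e2] at h
    exact h
  rw [Finset.sum_congr rfl hA]
  have hB : ∀ i ∈ I, ∀ j ∈ I.erase i, (z i : ℚ) * z j * (ph (z i + z j) / (ph (z i) * ph (z j)) * (1 / n)) =
      1 / n * (2 * ((z i : ℚ) + z j)) + (1 / n * ((z j : ℚ) * (z i + z j) * SS (z i) (z j) / cc (z i))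
       + 1 / n * ((z i : ℚ) * (z j + z i) * SS (z j) (z i) / cc (z j))) := by
    intro i hi j hj
    have hi' := hz i hi
    have hj' := hz j (Finset.mem_of_mem_erase hj)
    have h := id2 (z i) (z j) hi' hj'
    change cc (z i + z j) = 2 * cc (z i) * cc (z j) + z j * cc (z j) * SS (z i) (z j)
      + z i * cc (z i) * SS (z j) (z i) at h
    have h1 := cc_pos (z i)
    have h2 := cc_pos (z j)
    have h3 : (z i : ℚ) ≠ 0 := by positivity
    have h4 : (z j : ℚ) ≠ 0 := by positivity
    unfold ph
    rw [h]
    push_cast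
    field_simp
    ring
  rw [Finset.sum_congr rfl (fun i hi => Finset.sum_congr rfl (hB i hi))]
  simp only [Finset.sum_add_distrib, Finset.sum_sub_distrib, ← Finset.mul_sum]
  rw [sum_erase_comm I (fun i j => (z i : ℚ) * (z j + z i) * SS (z j) (z i) / cc (z j)),
    sum_erase_comm I (fun i j => (z j : ℚ))]
  have hC : ∑ i ∈ I, ∑ j ∈ I.erase i, (z i : ℚ) = (I.card - 1) * n := by
    rw [hn, Finset.mul_sum]
    apply Finset.sum_congr rfl
    intro i hi
    rw [Finset.sum_const, Finset.card_erase_of_mem hi, nsmul_eq_mul, Nat.cast_sub (Finset.card_pos.2 ⟨i, hi⟩)]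
    simp
  rw [hC, ← hn]
  simp only [Finset.sum_const, nsmul_eq_mul, mul_one]
  field_simp
  ring

end algebra

section combinatorics
open Finset
open scoped Classical
variable {V : Type*}

/-- Join of a setoid with the relation identifying `x` and `y`. -/
def mrg (r : Setoid V) (x y : V) : Setoid V where
  r u v := r u v ∨ (r u x ∧ r y v) ∨ (r u y ∧ r x v)
  iseqv := by
    refine ⟨fun u => Or.inl (r.refl u), ?_, ?_⟩
    · intro u v h
      rcases h with h | ⟨h, h'⟩ | ⟨h, h'⟩
      · exact Or.inl (r.symm h)
      · exact Or.inr (Or.inr ⟨r.symm h', r.symm h⟩)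
      · exact Or.inr (Or.inl ⟨r.symm h', r.symm h⟩)
    · intro u v w h k
      rcases h with h | ⟨h, h'⟩ | ⟨h, h'⟩ <;> rcases k with k | ⟨k, k'⟩ | ⟨k, k'⟩
      · exact Or.inl (r.trans h k)
      · exact Or.inr (Or.inl ⟨r.trans h k, k'⟩)
      · exact Or.inr (Or.inr ⟨r.trans h k, k'⟩)
      · exact Or.inr (Or.inl ⟨h, r.trans h' k⟩)
      · exact Or.inr (Or.inl ⟨h, k'⟩)
      · exact Or.inl (r.trans h k')
      · exact Or.inr (Or.inr ⟨h, r.trans h' k⟩)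
      · exact Or.inl (r.trans h k')
      · exact Or.inr (Or.inr ⟨h, k'⟩)

lemma mrg_iff (r : Setoid V) (x y u v : V) :
    mrg r x y u v ↔ r u v ∨ (r u x ∧ r y v) ∨ (r u y ∧ r x v) := Iff.rfl

lemma le_mrg (r : Setoid V) (x y : V) : r ≤ mrg r x y := fun _ _ h => Or.inl h

lemma mrg_xy (r : Setoid V) (x y : V) : mrg r x y x y :=
  Or.inr (Or.inl ⟨r.refl _, r.refl _⟩)

lemma mrg_le_iff (r s : Setoid V) (x y : V) : mrg r x y ≤ s ↔ r ≤ s ∧ s x y := by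
  constructor
  · intro h
    exact ⟨(le_mrg r x y).trans h, h (mrg_xy r x y)⟩
  · rintro ⟨h, hxy⟩ u v (k | ⟨k, k'⟩ | ⟨k, k'⟩)
    · exact h k
    · exact s.trans (h k) (s.trans hxy (h k'))
    · exact s.trans (h k) (s.trans (s.symm hxy) (h k'))

lemma mrg_of_rel {r : Setoid V} {x y : V} (h : r x y) : mrg r x y = r :=
  le_antisymm ((mrg_le_iff _ _ _ _).2 ⟨le_rfl, h⟩) (le_mrg _ _ _)

lemma mrg_comm (r : Setoid V) (x y : V) : mrg r x y = mrg r y x :=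
  le_antisymm ((mrg_le_iff _ _ _ _).2 ⟨le_mrg _ _ _, (mrg r y x).symm (mrg_xy _ _ _)⟩)
   ((mrg_le_iff _ _ _ _).2 ⟨le_mrg _ _ _, (mrg r x y).symm (mrg_xy _ _ _)⟩)

variable [Fintype V] [DecidableEq V]

noncomputable def cls (r : Setoid V) (x : V) : Finset V := univ.filter (fun v => r x v)

noncomputable def parts (r : Setoid V) : Finset (Finset V) := univ.image (cls r)

lemma mem_cls {r : Setoid V} {x v : V} : v ∈ cls r x ↔ r x v := by simp [cls]

lemma self_mem_cls (r : Setoid V) (x : V) : x ∈ cls r x := mem_cls.2 (r.refl x)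

lemma cls_card_pos (r : Setoid V) (x : V) : 0 < (cls r x).card :=
  card_pos.2 ⟨x, self_mem_cls r x⟩

lemma cls_eq_iff {r : Setoid V} {x y : V} : cls r x = cls r y ↔ r x y := by
  constructor
  · intro h
    have : y ∈ cls r x := h ▸ self_mem_cls r y
    exact mem_cls.1 this
  · intro h
    ext v
    rw [mem_cls, mem_cls]
    exact ⟨fun k => r.trans (r.symm h) k, fun k => r.trans h k⟩

lemma cls_mem_parts (r : Setoid V) (x : V) : cls r x ∈ parts r := mem_image_of_mem _ (mem_univ x)

lemma mem_parts {r : Setoid V} {C : Finset V} : C ∈ parts r ↔ ∃ x, cls r x = C := by simp [parts]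

lemma parts_card_pos {r : Setoid V} {C : Finset V} (h : C ∈ parts r) : 0 < C.card := by
  obtain ⟨x, rfl⟩ := mem_parts.1 h
  exact cls_card_pos r x

lemma eq_cls_of_mem {r : Setoid V} {C : Finset V} (h : C ∈ parts r) {x : V} (hx : x ∈ C) : C = cls r x := by
  obtain ⟨y, rfl⟩ := mem_parts.1 h
  exact cls_eq_iff.2 (mem_cls.1 hx)

lemma sum_cls {M : Type*} [AddCommMonoid M] (r : Setoid V) (f : V → M) :
    ∑ x, f x = ∑ C ∈ parts r, ∑ x ∈ C, f x := by
  rw [← sum_fiberwise_of_maps_to (s := univ) (t := parts r) (g := cls r) (fun x _ => cls_mem_parts r x)]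
  refine sum_congr rfl fun C hC => sum_congr ?_ fun _ _ => rfl
  ext x
  simp only [mem_filter, mem_univ, true_and]
  constructor
  · rintro rfl; exact self_mem_cls r x
  · intro h; exact (eq_cls_of_mem hC h).symm

lemma sum_parts_card (r : Setoid V) : ∑ C ∈ parts r, C.card = Fintype.card V := by
  have := sum_cls r (fun _ => 1)
  simpa using this.symm

lemma cls_mrg {r : Setoid V} {x y u : V} : cls (mrg r x y) u =
    if r u x ∨ r u y then cls r x ∪ cls r y else cls r u := by
  ext v
  have s := @r.symm; have t := @r.trans
  split_ifs with h
  · rw [mem_union, mem_cls, mem_cls, mem_cls, mrg_iff]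
    constructor
    · rintro (k | ⟨k, k'⟩ | ⟨k, k'⟩)
      · rcases h with h | h
        · exact Or.inl (t (s h) k)
        · exact Or.inr (t (s h) k)
      · exact Or.inr k'
      · exact Or.inl k'
    · rintro (k | k)
      · rcases h with h | h
        · exact Or.inl (t h k)
        · exact Or.inr (Or.inr ⟨h, k⟩)
      · rcases h with h | h
        · exact Or.inr (Or.inl ⟨h, k⟩)
        · exact Or.inl (t h k)
  · rw [mem_cls, mem_cls, mrg_iff]
    push Not at h
    tauto

lemma parts_mrg {r : Setoid V} {x y : V} :
    parts (mrg r x y) = insert (cls r x ∪ cls r y) (((parts r).erase (cls r x)).erase (cls r y)) := by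
  ext C
  rw [mem_parts, mem_insert, mem_erase, mem_erase, mem_parts]
  constructor
  · rintro ⟨u, rfl⟩
    rw [cls_mrg]
    split_ifs with h
    · exact Or.inl rfl
    · push Not at h
      refine Or.inr ⟨?_, ?_, u, rfl⟩ <;> rw [Ne, cls_eq_iff] <;> tauto
  · rintro (rfl | ⟨h1, h2, u, rfl⟩)
    · refine ⟨x, ?_⟩
      rw [cls_mrg, if_pos (Or.inl (r.refl x))]
    · refine ⟨u, ?_⟩
      rw [Ne, cls_eq_iff] at h1 h2
      rw [cls_mrg, if_neg (by tauto)]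

lemma parts_mrg_notMem {r : Setoid V} {x y : V} (h : ¬ r x y) :
    (cls r x ∪ cls r y) ∉ (((parts r).erase (cls r x)).erase (cls r y)) := by
  intro k
  rw [mem_erase, mem_erase] at k
  obtain ⟨h1, h2, h3⟩ := k
  exact h2 (eq_cls_of_mem h3 (mem_union_left _ (self_mem_cls r x)))

lemma prod_parts_mrg {r : Setoid V} {x y : V} (h : ¬ r x y) (f : Finset V → ℚ) :
    (∏ C ∈ parts (mrg r x y), f C) * (f (cls r x) * f (cls r y)) =
      (∏ C ∈ parts r, f C) * f (cls r x ∪ cls r y) := by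
  rw [parts_mrg, prod_insert (parts_mrg_notMem h)]
  rw [← mul_prod_erase (parts r) f (cls_mem_parts r x), ← mul_prod_erase ((parts r).erase (cls r x)) f (a := cls r y)]
  · ring
  · rw [mem_erase, Ne, cls_eq_iff]
    exact ⟨fun k => h (r.symm k), cls_mem_parts r y⟩

lemma card_parts_mrg {r : Setoid V} {x y : V} (h : ¬ r x y) :
    (parts (mrg r x y)).card + 1 = (parts r).card := by
  have h1 : cls r y ∈ (parts r).erase (cls r x) := by
    rw [mem_erase, Ne, cls_eq_iff]
    exact ⟨fun k => h (r.symm k), cls_mem_parts r y⟩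
  rw [parts_mrg, card_insert_of_notMem (parts_mrg_notMem h), card_erase_add_one h1,
    card_erase_add_one (cls_mem_parts r x)]

lemma cls_disjoint {r : Setoid V} {x y : V} (h : ¬ r x y) : Disjoint (cls r x) (cls r y) := by
  rw [disjoint_left]
  intro a h1 h2
  exact h (r.trans (mem_cls.1 h1) (r.symm (mem_cls.1 h2)))

lemma cls_subset {r s : Setoid V} (h : r ≤ s) (x : V) : cls r x ⊆ cls s x := by
  intro v hv
  exact mem_cls.2 (h (mem_cls.1 hv))

lemma le_of_cls_subset {r s : Setoid V} (h : ∀ x, cls r x ⊆ cls s x) : r ≤ s := by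
  intro u v k
  exact mem_cls.1 (h u (mem_cls.2 k))


section perm
variable {V : Type*}

/-- The setoid of cycles of a permutation. -/
def sc (σ : Perm V) : Setoid V := Perm.SameCycle.setoid σ

lemma sc_iff {σ : Perm V} {x y : V} : sc σ x y ↔ σ.SameCycle x y := Iff.rfl

lemma sc_step (σ : Perm V) (x : V) : sc σ x (σ x) := ⟨1, by simp⟩

lemma sc_pow (σ : Perm V) (x : V) (i : ℕ) : sc σ x ((σ ^ i) x) := ⟨i, by simp⟩

lemma sc_le {σ : Perm V} {r : Setoid V} (h : ∀ u, r u (σ u)) : sc σ ≤ r := by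
  have key : ∀ (n : ℕ) u, r u ((σ ^ n) u) := by
    intro n
    induction n with
    | zero => intro u; exact r.refl u
    | succ n ih =>
      intro u
      rw [pow_succ', Perm.mul_apply]
      exact r.trans (ih u) (h _)
  rintro u v ⟨i, rfl⟩
  cases i with
  | ofNat n => exact key n u
  | negSucc n =>
    have := key (n+1) ((σ ^ (Int.negSucc n)) u)
    rw [zpow_negSucc, ← Perm.mul_apply, mul_inv_cancel, Perm.one_apply] at this
    rw [zpow_negSucc]
    exact r.symm this

variable [Fintype V] [DecidableEq V]

lemma rel_swap {r : Setoid V} {x y : V} (h : r x y) (w : V) : r w (swap x y w) := by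
  rw [swap_apply_def]
  split_ifs with h1 h2
  · exact h1 ▸ h
  · exact h2 ▸ r.symm h
  · exact r.refl w

lemma sc_swap_mul_le (σ : Perm V) (x y : V) : sc (swap x y * σ) ≤ mrg (sc σ) x y := by
  refine sc_le fun u => ?_
  exact (mrg (sc σ) x y).trans (le_mrg _ _ _ (sc_step σ u)) (rel_swap (mrg_xy _ _ _) _)

lemma sc_le_swap_mul (σ : Perm V) (x y : V) : sc σ ≤ mrg (sc (swap x y * σ)) x y := by
  have := sc_swap_mul_le (swap x y * σ) x y
  rwa [← mul_assoc, swap_mul_self, one_mul] at this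

lemma pow_agree {σ : Perm V} {x y : V} {b : ℕ}
    (h : ∀ i, 0 < i → i < b → (σ ^ i) x ≠ x ∧ (σ ^ i) x ≠ y) :
    ∀ i, i < b → ((swap x y * σ) ^ i) x = (σ ^ i) x := by
  intro i
  induction i with
  | zero => intro _; rfl
  | succ i ih =>
    intro hi
    have h1 := ih (by omega)
    rw [pow_succ', Perm.mul_apply, h1, Perm.mul_apply, ← Perm.mul_apply σ, ← pow_succ']
    obtain ⟨h2, h3⟩ := h (i+1) (by omega) hi
    exact swap_apply_of_ne_of_ne h2 h3

lemma pow_agree_end {σ : Perm V} {x y : V} {b : ℕ} (hb : 0 < b)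
    (h : ∀ i, 0 < i → i < b → (σ ^ i) x ≠ x ∧ (σ ^ i) x ≠ y) :
    ((swap x y * σ) ^ b) x = swap x y ((σ ^ b) x) := by
  obtain ⟨c, rfl⟩ := Nat.exists_eq_add_of_lt hb
  rw [zero_add, pow_succ', Perm.mul_apply, pow_agree h c (by omega), Perm.mul_apply, ← Perm.mul_apply σ, ← pow_succ']

/-- cycle length -/
noncomputable def per (σ : Perm V) (x : V) : ℕ := Function.minimalPeriod σ x

lemma per_pos (σ : Perm V) (x : V) : 0 < per σ x := by
  apply Function.minimalPeriod_pos_of_mem_periodicPts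
  refine ⟨orderOf σ, orderOf_pos σ, ?_⟩
  rw [Function.IsPeriodicPt, Perm.iterate_eq_pow, pow_orderOf_eq_one]
  rfl

lemma pow_per (σ : Perm V) (x : V) : (σ ^ per σ x) x = x := by
  have := Function.isPeriodicPt_minimalPeriod σ x
  rwa [Function.IsPeriodicPt, Perm.iterate_eq_pow] at this

lemma pow_inj {σ : Perm V} {x : V} {i j : ℕ} (hi : i < per σ x) (hj : j < per σ x)
    (h : (σ ^ i) x = (σ ^ j) x) : i = j := by
  rw [← Perm.iterate_eq_pow, ← Perm.iterate_eq_pow] at h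
  exact (Function.iterate_eq_iterate_iff_of_lt_minimalPeriod hi hj).1 h

lemma per_eq {σ : Perm V} {x : V} {b : ℕ} (hb : 0 < b) (h : (σ ^ b) x = x)
    (h' : ∀ i, 0 < i → i < b → (σ ^ i) x ≠ x) : per σ x = b := by
  apply le_antisymm
  · apply Function.IsPeriodicPt.minimalPeriod_le hb
    rw [Function.IsPeriodicPt, Perm.iterate_eq_pow]
    exact h
  · by_contra k
    exact h' _ (per_pos σ x) (not_le.1 k) (pow_per σ x)

lemma cls_sc (σ : Perm V) (x : V) : cls (sc σ) x = (range (per σ x)).image (fun i => (σ ^ i) x) := by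
  ext v
  rw [mem_cls, mem_image, sc_iff]
  constructor
  · intro h
    obtain ⟨i, hi⟩ := h.exists_nat_pow_eq
    refine ⟨i % per σ x, mem_range.2 (Nat.mod_lt _ (per_pos σ x)), ?_⟩
    rw [← hi, ← Perm.iterate_eq_pow, ← Perm.iterate_eq_pow]
    exact Function.iterate_mod_minimalPeriod_eq
  · rintro ⟨i, _, rfl⟩
    exact sc_pow σ x i

lemma cls_sc_card (σ : Perm V) (x : V) : (cls (sc σ) x).card = per σ x := by
  rw [cls_sc, card_image_of_injOn, card_range]
  intro i hi j hj h
  exact pow_inj (by simpa using hi) (by simpa using hj) h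

/-- Joining two cycles. -/
lemma sc_join {σ : Perm V} {x y : V} (h : ¬ sc σ x y) : sc (swap x y * σ) = mrg (sc σ) x y := by
  have hxy : sc (swap x y * σ) x y := by
    have := pow_agree_end (σ := σ) (x := x) (y := y) (per_pos σ x) (by
      intro i h0 hi
      refine ⟨fun k => ?_, fun k => h (k ▸ sc_pow σ x i)⟩
      have := pow_inj (j := 0) hi (per_pos σ x) k
      omega)
    rw [pow_per, swap_apply_left] at this
    have k := sc_pow (swap x y * σ) x (per σ x)
    rwa [this] at k
  refine le_antisymm (sc_swap_mul_le σ x y) ((mrg_le_iff _ _ _ _).2 ⟨?_, hxy⟩)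
  have := sc_le_swap_mul σ x y
  rwa [mrg_of_rel hxy] at this

lemma sc_cut_aux {σ : Perm V} {x : V} {b : ℕ} (hb : 0 < b) (hb' : b < per σ x) :
    per (swap x ((σ ^ b) x) * σ) x = b ∧ ¬ sc (swap x ((σ ^ b) x) * σ) x ((σ ^ b) x) := by
  have hh : ∀ i, 0 < i → i < b → (σ ^ i) x ≠ x ∧ (σ ^ i) x ≠ (σ ^ b) x := by
    intro i h0 hi
    refine ⟨fun k => ?_, fun k => ?_⟩
    · have := pow_inj (j := 0) (by omega) (per_pos σ x) k
      omega
    · have := pow_inj (by omega) hb' k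
      omega
  have hp : per (swap x ((σ ^ b) x) * σ) x = b := by
    apply per_eq hb
    · rw [pow_agree_end hb hh, swap_apply_right]
    · intro i h0 hi
      rw [pow_agree hh i hi]
      exact (hh i h0 hi).1
  refine ⟨hp, ?_⟩
  rw [← mem_cls, cls_sc, hp, mem_image]
  rintro ⟨i, hi, k⟩
  rw [mem_range] at hi
  rw [pow_agree hh i hi] at k
  have := pow_inj (by omega) hb' k
  omega

/-- Cutting a cycle. -/
lemma sc_cut {σ : Perm V} {x y : V} (hne : y ≠ x) (h : sc σ x y) :
    ¬ sc (swap x y * σ) x y ∧ mrg (sc (swap x y * σ)) x y = sc σ := by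
  have h1 : ¬ sc (swap x y * σ) x y := by
    have hy : y ∈ cls (sc σ) x := mem_cls.2 h
    rw [cls_sc, mem_image] at hy
    obtain ⟨b, hb, rfl⟩ := hy
    refine (sc_cut_aux ?_ (mem_range.1 hb)).2
    rcases Nat.eq_zero_or_pos b with rfl | hb
    · exact absurd rfl hne
    · exact hb
  refine ⟨h1, ?_⟩
  rw [← sc_join h1, ← mul_assoc, swap_mul_self, one_mul]

lemma sum_cut {M : Type*} [AddCommMonoid M] (σ : Perm V) (x : V) (F : ℕ → M) :
    ∑ y ∈ (cls (sc σ) x).erase x, F (cls (sc (swap x y * σ)) x).card =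
      ∑ b ∈ Ico 1 (cls (sc σ) x).card, F b := by
  have e : (cls (sc σ) x).erase x = (Ico 1 (cls (sc σ) x).card).image (fun i => (σ ^ i) x) := by
    rw [cls_sc_card, cls_sc]
    ext v
    simp only [mem_erase, mem_image, mem_range, mem_Ico]
    constructor
    · rintro ⟨hv, i, hi, rfl⟩
      refine ⟨i, ⟨?_, hi⟩, rfl⟩
      rcases Nat.eq_zero_or_pos i with rfl | hb
      · exact absurd rfl hv
      · exact hb
    · rintro ⟨i, ⟨h0, hi⟩, rfl⟩
      refine ⟨fun k => ?_, i, hi, rfl⟩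
      have := pow_inj (j := 0) hi (per_pos σ x) k
      omega
  rw [e, sum_image]
  · refine sum_congr rfl fun b hb => ?_
    rw [mem_Ico, cls_sc_card] at hb
    rw [cls_sc_card, (sc_cut_aux (by omega) hb.2).1]
  · intro i hi j hj h
    simp only [coe_Ico, Set.mem_Ico, cls_sc_card] at hi hj
    exact pow_inj hi.2 hj.2 h
end perm

section weights
variable {V : Type*} [Fintype V] [DecidableEq V]

/-- Classes of `r` inside `B`. -/
noncomputable def ib (r : Setoid V) (B : Finset V) : Finset (Finset V) := (parts r).filter (· ⊆ B)

lemma mem_ib {r : Setoid V} {B C : Finset V} : C ∈ ib r B ↔ C ∈ parts r ∧ C ⊆ B := by simp [ib]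

lemma cls_subset_part {r s : Setoid V} (h : r ≤ s) {B : Finset V} (hB : B ∈ parts s) {x : V} :
    cls r x ⊆ B ↔ x ∈ B := by
  constructor
  · intro k; exact k (self_mem_cls r x)
  · intro k
    rw [eq_cls_of_mem hB k]
    exact cls_subset h x

lemma sum_ib {M : Type*} [AddCommMonoid M] {r s : Setoid V} (h : r ≤ s) {B : Finset V} (hB : B ∈ parts s)
    (f : V → M) : ∑ x ∈ B, f x = ∑ C ∈ ib r B, ∑ x ∈ C, f x := by
  have := sum_cls r (fun x => if x ∈ B then f x else 0)
  rw [sum_ite_mem, univ_inter] at this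
  rw [this, ib, sum_filter]
  refine sum_congr rfl fun C hC => ?_
  obtain ⟨x, rfl⟩ := mem_parts.1 hC
  simp only [cls_subset_part h hB]
  split_ifs with hx
  · refine sum_congr rfl fun y hy => if_pos ?_
    exact (cls_subset_part h hB).2 hx hy
  · refine sum_eq_zero fun y hy => if_neg fun hy' => hx ?_
    have := mem_cls.1 hy
    rw [eq_cls_of_mem hB hy', mem_cls]
    exact s.symm (h this)

lemma sum_ib_card {r s : Setoid V} (h : r ≤ s) {B : Finset V} (hB : B ∈ parts s) :
    ∑ C ∈ ib r B, C.card = B.card := by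
  have := sum_ib h hB (fun _ => 1)
  simpa using this.symm

lemma biUnion_cls {r s : Setoid V} (h : r ≤ s) (x : V) : (cls r x).biUnion (cls s) = cls s x := by
  ext v
  rw [mem_biUnion]
  constructor
  · rintro ⟨u, hu, hv⟩
    rw [mem_cls] at *
    exact s.trans (h hu) hv
  · intro hv
    exact ⟨x, self_mem_cls r x, hv⟩

lemma parts_card_le {r s : Setoid V} (h : r ≤ s) : (parts s).card ≤ (parts r).card := by
  have : parts s = (parts r).image (fun C => C.biUnion (cls s)) := by
    ext B
    rw [mem_parts, mem_image]
    constructor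
    · rintro ⟨x, rfl⟩
      exact ⟨_, cls_mem_parts r x, biUnion_cls h x⟩
    · rintro ⟨C, hC, rfl⟩
      obtain ⟨x, rfl⟩ := mem_parts.1 hC
      exact ⟨x, (biUnion_cls h x).symm⟩
  rw [this]
  exact card_image_le

lemma parts_card_le_card (r : Setoid V) : (parts r).card ≤ Fintype.card V := card_image_le

lemma eq_bot_of_parts_card {r : Setoid V} (h : (parts r).card = Fintype.card V) : r = ⊥ := by
  rw [eq_bot_iff]
  intro u v huv
  have hinj : Set.InjOn (cls r) (univ : Finset V) := card_image_iff.1 h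
  exact hinj (by simp) (by simp) (cls_eq_iff.2 huv)

lemma cls_bot (x : V) : cls (⊥ : Setoid V) x = {x} := by
  ext v
  rw [mem_cls, mem_singleton]
  exact eq_comm

lemma parts_bot_card : (parts (⊥ : Setoid V)).card = Fintype.card V := by
  rw [parts, card_image_of_injective]
  · rfl
  · intro x y hxy
    exact cls_eq_iff.1 hxy

lemma sum_parts_ib {M : Type*} [AddCommMonoid M] {r s : Setoid V} (h : r ≤ s) (f : Finset V → M) :
    ∑ C ∈ parts r, f C = ∑ B ∈ parts s, ∑ C ∈ ib r B, f C := by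
  have e : ∀ B ∈ parts s, ib r B = (parts r).filter (fun C => C.biUnion (cls s) = B) := by
    intro B hB
    ext C
    rw [mem_ib, mem_filter]
    refine and_congr_right fun hC => ?_
    obtain ⟨x, rfl⟩ := mem_parts.1 hC
    rw [cls_subset_part h hB, biUnion_cls h]
    exact ⟨fun hx => (eq_cls_of_mem hB hx).symm, fun hx => hx ▸ self_mem_cls s x⟩
  rw [sum_congr (s₁ := parts s) rfl fun B hB => by rw [e B hB]]
  symm
  apply sum_fiberwise_of_maps_to
  intro C hC
  obtain ⟨x, rfl⟩ := mem_parts.1 hC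
  rw [biUnion_cls h]
  exact cls_mem_parts s x

/-- weight of a block -/
noncomputable def bw (r : Setoid V) (B : Finset V) : ℚ := (B.card : ℚ) ^ (((ib r B).card : ℤ) - 3)

/-- The weight. -/
noncomputable def W (s r : Setoid V) : ℚ := (∏ C ∈ parts r, ph C.card) * ∏ B ∈ parts s, bw r B

lemma bw_pos (r : Setoid V) {B : Finset V} (hB : 0 < B.card) : 0 < bw r B := by
  unfold bw; positivity

lemma W_pos (s r : Setoid V) : 0 < W s r := by
  refine mul_pos (prod_pos fun C hC => ph_pos _ (parts_card_pos hC)) (prod_pos fun B hB => bw_pos r (parts_card_pos hB))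

lemma ib_mrg_card {r : Setoid V} {x y : V} (hr : ¬ r x y) {B : Finset V} {s : Setoid V} (h : r ≤ s) (hs : s x y)
    (hB : B ∈ parts s) :
    (ib r B).card = (ib (mrg r x y) B).card + if x ∈ B then 1 else 0 := by
  have hy : y ∈ B ↔ x ∈ B := by
    constructor
    · intro k; rw [eq_cls_of_mem hB k, mem_cls]; exact s.symm hs
    · intro k; rw [eq_cls_of_mem hB k, mem_cls]; exact hs
  have h1 : cls r y ∈ (parts r).erase (cls r x) := by
    rw [mem_erase, Ne, cls_eq_iff]
    exact ⟨fun k => hr (r.symm k), cls_mem_parts r y⟩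
  rw [ib, ib, card_filter, card_filter, parts_mrg, sum_insert (parts_mrg_notMem hr),
    ← add_sum_erase (parts r) _ (cls_mem_parts r x), ← add_sum_erase _ _ h1]
  simp only [union_subset_iff, cls_subset_part h hB, hy, and_self]
  split_ifs <;> omega

lemma W_join {r s : Setoid V} {x y : V} (hr : ¬ r x y) (h : r ≤ s) (hs : s x y) :
    W s (mrg r x y) = W s r * (ph ((cls r x).card + (cls r y).card) / (ph (cls r x).card * ph (cls r y).card)
      * (1 / (cls s x).card)) := by
  have h1 := prod_parts_mrg hr (fun C => ph C.card)
  have px := ph_pos _ (cls_card_pos r x)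
  have py := ph_pos _ (cls_card_pos r y)
  have pc : (0:ℚ) < (cls s x).card := by exact_mod_cast cls_card_pos s x
  simp only [card_union_of_disjoint (cls_disjoint hr)] at h1
  have h1' : (∏ C ∈ parts (mrg r x y), ph C.card) = (∏ C ∈ parts r, ph C.card) *
      (ph ((cls r x).card + (cls r y).card) / (ph (cls r x).card * ph (cls r y).card)) := by
    rw [← mul_div_assoc, eq_div_iff (by positivity), h1]
  have h2 : (∏ B ∈ parts s, bw (mrg r x y) B) = (∏ B ∈ parts s, bw r B) * (1 / (cls s x).card) := by
    rw [← mul_prod_erase _ _ (cls_mem_parts s x), ← mul_prod_erase (parts s) (bw r) (cls_mem_parts s x)]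
    have e1 : bw (mrg r x y) (cls s x) = bw r (cls s x) * (1 / (cls s x).card) := by
      unfold bw
      rw [ib_mrg_card hr h hs (cls_mem_parts s x), if_pos (self_mem_cls s x)]
      push_cast
      rw [show (((ib (mrg r x y) (cls s x)).card : ℤ) + 1 - 3) = (((ib (mrg r x y) (cls s x)).card : ℤ) - 3) + 1 by ring,
        zpow_add_one₀ pc.ne']
      field_simp
    have e2 : ∏ B ∈ (parts s).erase (cls s x), bw (mrg r x y) B = ∏ B ∈ (parts s).erase (cls s x), bw r B := by
      refine prod_congr rfl fun B hB => ?_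
      rw [mem_erase] at hB
      unfold bw
      rw [ib_mrg_card hr h hs hB.2, if_neg (fun k => hB.1 (eq_cls_of_mem hB.2 k))]
      simp
    rw [e1, e2]
    ring
  rw [W, W, h1', h2]
  ring

lemma W_cut {r s : Setoid V} {x y : V} (hr : ¬ r x y) (hs : ¬ s x y) (h : r ≤ s) :
    W s r = W (mrg s x y) (mrg r x y) * (ph (cls r x).card * ph (cls r y).card /
       ph ((cls r x).card + (cls r y).card) * (bw r (cls s x) * bw r (cls s y) /
        bw (mrg r x y) (cls (mrg s x y) x))) := by
  have px := ph_pos _ (cls_card_pos r x)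
  have py := ph_pos _ (cls_card_pos r y)
  have pxy := ph_pos ((cls r x).card + (cls r y).card) (by have := cls_card_pos r x; omega)
  have pc : (0:ℚ) < (cls (mrg s x y) x).card := by exact_mod_cast cls_card_pos _ x
  have hle : r ≤ mrg s x y := h.trans (le_mrg _ _ _)
  have h2 : W s r * bw r (cls (mrg s x y) x) = W (mrg s x y) r * (bw r (cls s x) * bw r (cls s y)) := by
    have := prod_parts_mrg hs (bw r)
    rw [cls_mrg, if_pos (Or.inl (s.refl x)), W, W, mul_assoc, mul_assoc, this]
  have h3 : bw r (cls (mrg s x y) x) = bw (mrg r x y) (cls (mrg s x y) x) * (cls (mrg s x y) x).card := by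
    unfold bw
    rw [ib_mrg_card hr hle (mrg_xy s x y) (cls_mem_parts _ x), if_pos (self_mem_cls _ x)]
    push_cast
    rw [← zpow_add_one₀ pc.ne']
    congr 1
    ring
  have p2 := bw_pos (mrg r x y) (cls_card_pos (mrg s x y) x)
  rw [W_join hr hle (mrg_xy s x y)]
  rw [h3] at h2
  field_simp
  linear_combination h2

lemma W_bot : W (⊥ : Setoid V) ⊥ = 1 := by
  rw [W, prod_eq_one, prod_eq_one, one_mul]
  · intro B hB
    obtain ⟨x, rfl⟩ := mem_parts.1 hB
    simp [bw, cls_bot]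
  · intro B hB
    obtain ⟨x, rfl⟩ := mem_parts.1 hB
    simp [ph, cc, cls_bot]
end weights

section bij
variable {V : Type*} [Fintype V] [DecidableEq V]

noncomputable instance setoidFintype : Fintype (Setoid V) := by
  haveI : Finite (Setoid V) := Finite.of_injective (fun r : Setoid V => fun x y => r x y) (by
    intro r s h
    ext x y
    exact iff_of_eq (congrFun (congrFun h x) y))
  exact Fintype.ofFinite _

lemma split_iff {t s : Setoid V} {x y : V} (ht : ¬ t x y) (e : mrg t x y = s) (u v : V) :
    t u v ↔ s u v ∧ (u ∈ cls t x ↔ v ∈ cls t x) := by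
  subst e
  have tr := @t.trans; have sy := @t.symm
  rw [mrg_iff, mem_cls, mem_cls]
  constructor
  · intro h
    exact ⟨Or.inl h, fun k => tr k h, fun k => tr k (sy h)⟩
  · rintro ⟨h | ⟨h, h'⟩ | ⟨h, h'⟩, k⟩
    · exact h
    · exact absurd (tr (k.1 (sy h)) (sy h')) ht
    · exact absurd (tr (k.2 h') h) ht

lemma split_ib {r t s : Setoid V} {x y : V} (hr : ¬ r x y) (ht : ¬ t x y) (e : mrg t x y = s) (h : r ≤ t) :
    cls r x ∉ (ib (mrg r x y) (cls s x)).erase (cls (mrg r x y) x) ∧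
    ib r (cls t x) = insert (cls r x)
      (((ib (mrg r x y) (cls s x)).erase (cls (mrg r x y) x)).filter (· ⊆ cls t x)) := by
  have hC : cls (mrg r x y) x = cls r x ∪ cls r y := by
    rw [cls_mrg, if_pos (Or.inl (r.refl x))]
  have hts : t ≤ s := e ▸ le_mrg t x y
  have hR : ∀ D, D ∈ (ib (mrg r x y) (cls s x)).erase (cls (mrg r x y) x) ↔
      D ∈ parts r ∧ D ≠ cls r x ∧ D ≠ cls r y ∧ D ⊆ cls s x := by
    intro D
    rw [hC, mem_erase, mem_ib, parts_mrg, mem_insert, mem_erase, mem_erase]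
    constructor
    · tauto
    · rintro ⟨h1, h2, h3, h4⟩
      refine ⟨?_, by tauto, h4⟩
      rintro rfl
      exact parts_mrg_notMem hr (mem_erase.2 ⟨h3, mem_erase.2 ⟨h2, h1⟩⟩)
  refine ⟨fun k => ((hR _).1 k).2.1 rfl, ?_⟩
  ext D
  rw [mem_insert, mem_filter, hR, mem_ib]
  constructor
  · rintro ⟨h1, h2⟩
    by_cases hD : D = cls r x
    · exact Or.inl hD
    · refine Or.inr ⟨⟨h1, hD, ?_, h2.trans (cls_subset hts x)⟩, h2⟩
      rintro rfl
      exact ht (mem_cls.1 (h2 (self_mem_cls r y)))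
  · rintro (rfl | ⟨⟨h1, -⟩, h2⟩)
    · exact ⟨cls_mem_parts r x, cls_subset h x⟩
    · exact ⟨h1, h2⟩

lemma split_val {r t s : Setoid V} {x y : V} (hr : ¬ r x y) (ht : ¬ t x y) (e : mrg t x y = s) (h : r ≤ t) :
    bw r (cls t x) = (((cls r x).card : ℚ) +
      ∑ D ∈ ((ib (mrg r x y) (cls s x)).erase (cls (mrg r x y) x)).filter (· ⊆ cls t x), (D.card:ℚ)) ^
       (((((ib (mrg r x y) (cls s x)).erase (cls (mrg r x y) x)).filter (· ⊆ cls t x)).card : ℤ) - 2) := by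
  obtain ⟨h1, h2⟩ := split_ib hr ht e h
  have h1' : cls r x ∉ ((ib (mrg r x y) (cls s x)).erase (cls (mrg r x y) x)).filter (· ⊆ cls t x) :=
    fun k => h1 (mem_filter.1 k).1
  have h3 := sum_ib_card h (cls_mem_parts t x)
  rw [bw, ← h3, h2, card_insert_of_notMem h1', sum_insert h1']
  push_cast
  congr 1
  ring

lemma cut_bij {r s : Setoid V} {x y : V} (hr : ¬ r x y) (hle : mrg r x y ≤ s) :
    ∑ t ∈ univ.filter (fun t : Setoid V => mrg t x y = s ∧ t ≠ s ∧ r ≤ t), bw r (cls t x) * bw r (cls t y)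
      = inner (fun D : Finset V => D.card) ((ib (mrg r x y) (cls s x)).erase (cls (mrg r x y) x))
          (cls r x).card (cls r y).card := by
  have hsxy : s x y := hle (mrg_xy r x y)
  have hnt : ∀ t : Setoid V, mrg t x y = s → t ≠ s → ¬ t x y := by
    intro t e ne k
    rw [mrg_of_rel k] at e
    exact ne e
  set R := (ib (mrg r x y) (cls s x)).erase (cls (mrg r x y) x) with hRdef
  have hR : ∀ D, D ∈ R ↔ D ∈ parts (mrg r x y) ∧ D ⊆ cls s x ∧ D ≠ cls (mrg r x y) x := by
    intro D
    rw [hRdef, mem_erase, mem_ib]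
    tauto
  unfold inner
  refine sum_bij (fun t _ => R.filter (· ⊆ cls t x)) ?_ ?_ ?_ ?_
  · intro t _
    exact mem_powerset.2 (filter_subset _ _)
  · intro t₁ h₁ t₂ h₂ hh
    simp only [mem_filter, mem_univ, true_and] at h₁ h₂
    obtain ⟨e₁, n₁, l₁⟩ := h₁
    obtain ⟨e₂, n₂, l₂⟩ := h₂
    have k₁ := (split_ib hr (hnt _ e₁ n₁) e₁ l₁).2
    have k₂ := (split_ib hr (hnt _ e₂ n₂) e₂ l₂).2
    rw [← hRdef] at k₁ k₂
    rw [hh, ← k₂] at k₁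
    have hcls : cls t₁ x = cls t₂ x := by
      ext u
      rw [← cls_subset_part l₁ (cls_mem_parts t₁ x), ← cls_subset_part l₂ (cls_mem_parts t₂ x)]
      have := Finset.ext_iff.1 k₁ (cls r u)
      rw [mem_ib, mem_ib] at this
      have hp := cls_mem_parts r u
      tauto
    ext u v
    rw [split_iff (hnt _ e₁ n₁) e₁, split_iff (hnt _ e₂ n₂) e₂, hcls]
  · intro T hT
    rw [mem_powerset] at hT
    have hTx : ∀ D ∈ T, x ∉ D ∧ y ∉ D := by
      intro D hD
      obtain ⟨h1, h2, h3⟩ := (hR D).1 (hT hD)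
      refine ⟨fun k => h3 (eq_cls_of_mem h1 k), fun k => h3 ?_⟩
      rw [eq_cls_of_mem h1 k, cls_eq_iff]
      exact (mrg r x y).symm (mrg_xy r x y)
    set A := cls r x ∪ T.biUnion id with hA
    have hxA : x ∈ A := mem_union_left _ (self_mem_cls r x)
    have hyA : y ∉ A := by
      rw [hA, mem_union, mem_biUnion]
      rintro (k | ⟨D, hD, k⟩)
      · exact hr (mem_cls.1 k)
      · exact (hTx D hD).2 k
    have hAs : A ⊆ cls s x := by
      rw [hA, union_subset_iff, biUnion_subset]
      exact ⟨cls_subset ((le_mrg r x y).trans hle) x, fun D hD => ((hR D).1 (hT hD)).2.1⟩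
    have hAr : ∀ u v, r u v → u ∈ A → v ∈ A := by
      intro u v huv
      rw [hA, mem_union, mem_union, mem_biUnion, mem_biUnion]
      rintro (k | ⟨D, hD, k⟩)
      · exact Or.inl (mem_cls.2 (r.trans (mem_cls.1 k) huv))
      · refine Or.inr ⟨D, hD, ?_⟩
        obtain ⟨h1, h2, h3⟩ := (hR D).1 (hT hD)
        simp only [id] at k ⊢
        rw [eq_cls_of_mem h1 k, mem_cls]
        exact Or.inl huv
    let t : Setoid V :=
      { r := fun u v => s u v ∧ (u ∈ A ↔ v ∈ A)
        iseqv := ⟨fun u => ⟨s.refl u, Iff.rfl⟩, fun h => ⟨s.symm h.1, h.2.symm⟩,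
          fun h k => ⟨s.trans h.1 k.1, h.2.trans k.2⟩⟩ }
    have ht : ∀ u v, t u v ↔ s u v ∧ (u ∈ A ↔ v ∈ A) := fun u v => Iff.rfl
    have htxy : ¬ t x y := by rw [ht]; tauto
    have hts : t ≤ s := fun u v h => h.1
    have hcx : cls t x = A := by
      ext u
      rw [mem_cls, ht]
      constructor
      · rintro ⟨h1, h2⟩; exact h2.1 hxA
      · intro h; exact ⟨mem_cls.1 (hAs h), by tauto⟩
    refine ⟨t, ?_, ?_⟩
    · rw [mem_filter]
      refine ⟨mem_univ _, le_antisymm ((mrg_le_iff _ _ _ _).2 ⟨hts, hsxy⟩) ?_, ?_, ?_⟩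
      · intro u v huv
        have sy := @s.symm
        have tr := @s.trans
        rw [mrg_iff]
        by_cases hu : u ∈ A <;> by_cases hv : v ∈ A
        · exact Or.inl ⟨huv, by tauto⟩
        · have hxu : s x u := mem_cls.1 (hAs hu)
          exact Or.inr (Or.inl ⟨⟨sy hxu, by tauto⟩, ⟨tr (sy hsxy) (tr hxu huv), by tauto⟩⟩)
        · have hxv : s x v := mem_cls.1 (hAs hv)
          exact Or.inr (Or.inr ⟨⟨tr huv (tr (sy hxv) hsxy), by tauto⟩, ⟨hxv, by tauto⟩⟩)
        · exact Or.inl ⟨huv, by tauto⟩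
      · intro k
        rw [k] at htxy
        exact htxy hsxy
      · intro u v huv
        exact ⟨hle (le_mrg r x y huv), hAr u v huv, hAr v u (r.symm huv)⟩
    · rw [hcx]
      ext D
      rw [mem_filter]
      constructor
      · rintro ⟨h1, h2⟩
        obtain ⟨k1, k2, k3⟩ := (hR D).1 h1
        obtain ⟨u, hu⟩ := mem_parts.1 k1
        have huD : u ∈ D := hu ▸ self_mem_cls _ u
        have huA := h2 huD
        rw [hA, mem_union, mem_biUnion] at huA
        rcases huA with k | ⟨D', hD', k⟩
        · exfalso
          apply k3
          rw [← hu, cls_eq_iff]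
          exact Or.inl (r.symm (mem_cls.1 k))
        · have := eq_cls_of_mem ((hR D').1 (hT hD')).1 k
          rw [← hu, ← this]
          exact hD'
      · intro hD
        exact ⟨hT hD, (subset_biUnion_of_mem id hD).trans subset_union_right⟩
  · intro t ht
    simp only [mem_filter, mem_univ, true_and] at ht
    obtain ⟨e, ne, l⟩ := ht
    have htxy := hnt _ e ne
    have hyx : ¬ t y x := fun k => htxy (t.symm k)
    have hryx : ¬ r y x := fun k => hr (r.symm k)
    have v1 := split_val hr htxy e l
    have v2 := split_val hryx hyx ((mrg_comm t y x).trans e) l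
    rw [mrg_comm r y x, cls_eq_iff.2 (s.symm hsxy), cls_eq_iff.2 ((mrg r x y).symm (mrg_xy r x y))] at v2
    rw [← hRdef] at v1 v2
    have hc : R.filter (· ⊆ cls t y) = R \ R.filter (· ⊆ cls t x) := by
      ext D
      rw [mem_filter, mem_sdiff, mem_filter]
      have : D ∈ R → (D ⊆ cls t y ↔ ¬ D ⊆ cls t x) := by
        intro hD
        obtain ⟨k1, k2, k3⟩ := (hR D).1 hD
        rw [parts_mrg, mem_insert, mem_erase, mem_erase] at k1
        rcases k1 with rfl | ⟨m1, m2, m3⟩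
        · exfalso; apply k3
          rw [cls_mrg, if_pos (Or.inl (r.refl x))]
        · obtain ⟨u, rfl⟩ := mem_parts.1 m3
          rw [cls_subset_part l (cls_mem_parts t x), cls_subset_part l (cls_mem_parts t y)]
          have hu : s x u := mem_cls.1 (k2 (self_mem_cls r u))
          rw [← e, mrg_iff] at hu
          rw [mem_cls, mem_cls]
          have tr := @t.trans; have sy := @t.symm
          constructor
          · intro h1 h2; exact htxy (tr h2 (sy h1))
          · intro h1
            rcases hu with h | ⟨_, h⟩ | ⟨_, h⟩
            · exact absurd h h1
            · exact h
            · exact absurd h h1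
      tauto
    rw [v1, v2, hc]
end bij

section main
variable {V : Type*} [Fintype V] [DecidableEq V]

/-- weighted count of transposition factorizations -/
noncomputable def NN : ℕ → Setoid V → Perm V → ℚ
  | 0, s, σ => if s = ⊥ ∧ σ = 1 then 1 else 0
  | k+1, s, σ => 1/2 * ∑ x : V, ∑ y ∈ univ.erase x, ∑ t : Setoid V,
      if mrg t x y = s then NN k t (swap x y * σ) else 0

lemma sc_one : sc (1 : Perm V) = ⊥ := by
  rw [eq_bot_iff]
  exact sc_le fun u => rfl

lemma sc_eq_bot {σ : Perm V} (h : sc σ = ⊥) : σ = 1 := by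
  ext u
  have := sc_step σ u
  rw [h] at this
  exact this.symm

lemma join_le {s t : Setoid V} {σ : Perm V} {x y : V} (h : ¬ sc σ x y) (e : mrg t x y = s)
    (hle : sc (swap x y * σ) ≤ t) : t = s := by
  rw [sc_join h] at hle
  have := hle (mrg_xy _ x y)
  rw [← e, mrg_of_rel this]

lemma le_step {s t : Setoid V} {σ : Perm V} {x y : V} (e : mrg t x y = s)
    (hle : sc (swap x y * σ) ≤ t) : sc σ ≤ s := by
  refine (sc_le_swap_mul σ x y).trans ?_
  rw [mrg_le_iff, ← e]
  exact ⟨hle.trans (le_mrg _ _ _), mrg_xy _ _ _⟩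

def Claim (V : Type*) [Fintype V] [DecidableEq V] (k : ℕ) : Prop :=
  (∀ (s : Setoid V) (σ : Perm V), ¬ sc σ ≤ s → NN k s σ = 0) ∧
  (∀ (s : Setoid V) (σ : Perm V), k + 2 * (parts s).card < Fintype.card V + (parts (sc σ)).card → NN k s σ = 0) ∧
  (∀ (s : Setoid V) (σ : Perm V), sc σ ≤ s → k + 2 * (parts s).card = Fintype.card V + (parts (sc σ)).card →
    NN k s σ = k.factorial * W s (sc σ))

lemma claim_zero : Claim V 0 := by
  refine ⟨?_, ?_, ?_⟩
  · intro s σ h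
    rw [NN, if_neg]
    rintro ⟨rfl, rfl⟩
    exact h sc_one.le
  · intro s σ h
    rw [NN, if_neg]
    rintro ⟨rfl, rfl⟩
    rw [sc_one, parts_bot_card] at h
    omega
  · intro s σ h1 h2
    have a := parts_card_le h1
    have b := parts_card_le_card (sc σ)
    have hs : s = ⊥ := eq_bot_of_parts_card (by omega)
    have hσ : sc σ = ⊥ := eq_bot_iff.2 (hs ▸ h1)
    rw [NN, if_pos ⟨hs, sc_eq_bot hσ⟩, hs, hσ, W_bot]
    simp

lemma claim_i {k : ℕ} (ih : Claim V k) (s : Setoid V) (σ : Perm V) (h : ¬ sc σ ≤ s) : NN (k+1) s σ = 0 := by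
  rw [NN]
  refine mul_eq_zero_of_right _ (sum_eq_zero fun x _ => sum_eq_zero fun y _ => sum_eq_zero fun t _ => ?_)
  split_ifs with e
  · exact ih.1 _ _ fun hle => h (le_step e hle)
  · rfl

lemma parts_le_succ {t s : Setoid V} {x y : V} (e : mrg t x y = s) : (parts t).card ≤ (parts s).card + 1 := by
  by_cases h : t x y
  · rw [← e, mrg_of_rel h]; omega
  · rw [← e, card_parts_mrg h]

lemma claim_ii {k : ℕ} (ih : Claim V k) (s : Setoid V) (σ : Perm V)
    (h : k + 1 + 2 * (parts s).card < Fintype.card V + (parts (sc σ)).card) : NN (k+1) s σ = 0 := by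
  rw [NN]
  refine mul_eq_zero_of_right _ (sum_eq_zero fun x _ => sum_eq_zero fun y hy => sum_eq_zero fun t _ => ?_)
  split_ifs with e
  · by_cases hle : sc (swap x y * σ) ≤ t
    · apply ih.2.1
      by_cases hxy : sc σ x y
      · obtain ⟨h1, h2⟩ := sc_cut (ne_of_mem_erase hy) hxy
        have h3 := card_parts_mrg h1
        rw [h2] at h3
        have := parts_le_succ e
        omega
      · have h3 := card_parts_mrg hxy
        rw [← sc_join hxy] at h3
        rw [join_le hxy e hle]
        omega
    · exact ih.1 _ _ hle
  · rfl

/-- contribution of the ordered pair `(x,y)`. -/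
noncomputable def XX (k : ℕ) (s : Setoid V) (σ : Perm V) (x y : V) : ℚ :=
  ∑ t : Setoid V, if mrg t x y = s then NN k t (swap x y * σ) else 0

lemma XX_zero {k : ℕ} {s : Setoid V} {σ : Perm V} {x y : V} (h : ¬ s x y) : XX k s σ x y = 0 := by
  refine sum_eq_zero fun t _ => if_neg ?_
  rintro rfl
  exact h (mrg_xy _ _ _)

lemma XX_join {k : ℕ} (ih : Claim V k) {s : Setoid V} {σ : Perm V} (hle : sc σ ≤ s)
    (hk : k + 1 + 2 * (parts s).card = Fintype.card V + (parts (sc σ)).card)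
    {x y : V} (h : ¬ sc σ x y) (hs : s x y) :
    XX k s σ x y = k.factorial * W s (sc σ) * (ph ((cls (sc σ) x).card + (cls (sc σ) y).card) /
      (ph (cls (sc σ) x).card * ph (cls (sc σ) y).card) * (1 / (cls s x).card)) := by
  rw [XX, sum_eq_single s]
  · rw [if_pos (mrg_of_rel hs)]
    have h3 := card_parts_mrg h
    rw [← sc_join h] at h3
    rw [ih.2.2 _ _ _ (by omega), sc_join h, W_join h hle hs]
    · ring
    · rw [sc_join h, mrg_le_iff]
      exact ⟨hle, hs⟩
  · intro t _ ht
    split_ifs with e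
    · exact ih.1 _ _ fun hl => ht (join_le h e hl)
    · rfl
  · simp

lemma XX_cut {k : ℕ} (ih : Claim V k) {s : Setoid V} {σ : Perm V} (hle : sc σ ≤ s)
    (hk : k + 1 + 2 * (parts s).card = Fintype.card V + (parts (sc σ)).card)
    {x y : V} (hne : y ≠ x) (h : sc σ x y) (c : ℕ) (hc : c = (cls (sc (swap x y * σ)) x).card) :
    XX k s σ x y = k.factorial * W s (sc σ) * (ph c * ph ((cls (sc σ) x).card - c) / ph (cls (sc σ) x).card *
      (inner (fun D : Finset V => D.card) ((ib (sc σ) (cls s x)).erase (cls (sc σ) x)) c ((cls (sc σ) x).card - c)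
        / bw (sc σ) (cls s x))) := by
  obtain ⟨h1, h2⟩ := sc_cut hne h
  set r := sc (swap x y * σ) with hr
  have h3 := card_parts_mrg h1
  rw [h2] at h3
  have hcard : (cls (sc σ) x).card = (cls r x).card + (cls r y).card := by
    rw [← h2, cls_mrg, if_pos (Or.inl (r.refl x)), card_union_of_disjoint (cls_disjoint h1)]
  have hcy : (cls (sc σ) x).card - c = (cls r y).card := by omega
  rw [hcy, hc, ← h2, ← cut_bij h1 (h2 ▸ hle), XX]
  rw [sum_div, mul_sum, mul_sum, sum_filter]
  refine sum_congr rfl fun t _ => ?_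
  by_cases e : mrg t x y = s
  · rw [if_pos e]
    by_cases ht : t = s
    · rw [if_neg (by tauto), ht]
      apply ih.2.1
      rw [← hr]
      omega
    · by_cases hl : r ≤ t
      · rw [if_pos ⟨e, ht, hl⟩]
        have htxy : ¬ t x y := fun k => ht (by rw [← e, mrg_of_rel k])
        have h4 := card_parts_mrg htxy
        rw [e] at h4
        rw [ih.2.2 _ _ hl (by rw [← hr]; omega), ← hr, W_cut h1 htxy hl, e, h2, hcard]
        ring
      · rw [if_neg (by tauto)]
        exact ih.1 _ _ hl
  · rw [if_neg e, if_neg (by tauto)]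

lemma sum_XX {k : ℕ} (ih : Claim V k) {s : Setoid V} {σ : Perm V} (hle : sc σ ≤ s)
    (hk : k + 1 + 2 * (parts s).card = Fintype.card V + (parts (sc σ)).card)
    {B C : Finset V} (hB : B ∈ parts s) (hC : C ∈ ib (sc σ) B) {x : V} (hx : x ∈ C) :
    ∑ y ∈ univ.erase x, XX k s σ x y = k.factorial * W s (sc σ) *
      (∑ D ∈ (ib (sc σ) B).erase C, (D.card:ℚ) * (ph (C.card + D.card) / (ph C.card * ph D.card) * (1 / (B.card:ℚ)))
      + ∑ b ∈ Ico 1 C.card, ph b * ph (C.card - b) / ph C.card *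
         (inner (fun D : Finset V => D.card) ((ib (sc σ) B).erase C) b (C.card - b) / bw (sc σ) B)) := by
  have hCx : C = cls (sc σ) x := eq_cls_of_mem (mem_ib.1 hC).1 hx
  have hxB : x ∈ B := (mem_ib.1 hC).2 hx
  have hBx : B = cls s x := eq_cls_of_mem hB hxB
  have e1 : ∑ y ∈ univ.erase x, XX k s σ x y = ∑ y ∈ B.erase x, XX k s σ x y := by
    symm
    apply sum_subset (erase_subset_erase x (subset_univ B))
    intro y hy hy'
    apply XX_zero
    intro h
    apply hy'
    rw [mem_erase, hBx, mem_cls]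
    exact ⟨ne_of_mem_erase hy, h⟩
  have e2 : ∑ y ∈ B.erase x, XX k s σ x y = ∑ y ∈ B, if y = x then 0 else XX k s σ x y := by
    rw [← add_sum_erase B _ hxB, if_pos rfl, zero_add]
    refine sum_congr rfl fun y hy => ?_
    rw [if_neg (ne_of_mem_erase hy)]
  have e3 : ∑ y ∈ C, (if y = x then 0 else XX k s σ x y) = ∑ y ∈ C.erase x, XX k s σ x y := by
    rw [← add_sum_erase C _ hx, if_pos rfl, zero_add]
    refine sum_congr rfl fun y hy => ?_
    rw [if_neg (ne_of_mem_erase hy)]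
  rw [e1, e2, sum_ib hle hB, ← add_sum_erase _ _ hC, e3, mul_add, add_comm]
  congr 1
  · rw [mul_sum]
    refine sum_congr rfl fun D hD => ?_
    obtain ⟨hDC, hD⟩ := mem_erase.1 hD
    obtain ⟨hD1, hD2⟩ := mem_ib.1 hD
    have : ∀ y ∈ D, (if y = x then 0 else XX k s σ x y) = k.factorial * W s (sc σ) *
       (ph (C.card + D.card) / (ph C.card * ph D.card) * (1 / (B.card:ℚ))) := by
      intro y hy
      have hDy := eq_cls_of_mem hD1 hy
      have hxy : ¬ sc σ x y := by
        intro h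
        apply hDC
        rw [hCx, hDy, cls_eq_iff]
        exact (sc σ).symm h
      rw [if_neg, XX_join ih hle hk hxy, ← hCx, ← hDy, ← hBx]
      · have := hD2 hy
        rw [hBx] at this
        exact mem_cls.1 this
      · rintro rfl
        exact hxy ((sc σ).refl _)
    rw [sum_congr rfl this, sum_const, nsmul_eq_mul]
    ring
  · rw [mul_sum]
    have := sum_cut σ x (fun c => k.factorial * W s (sc σ) * (ph c * ph (C.card - c) / ph C.card *
         (inner (fun D : Finset V => D.card) ((ib (sc σ) B).erase C) c (C.card - c) / bw (sc σ) B)))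
    rw [← hCx] at this
    rw [← this]
    refine sum_congr rfl fun y hy => ?_
    rw [hCx, mem_erase, mem_cls] at hy
    rw [XX_cut ih hle hk hy.1 hy.2 _ rfl, ← hCx, ← hBx]

lemma claim_iii {k : ℕ} (ih : Claim V k) (s : Setoid V) (σ : Perm V) (hle : sc σ ≤ s)
    (hk : k + 1 + 2 * (parts s).card = Fintype.card V + (parts (sc σ)).card) :
    NN (k+1) s σ = (k+1).factorial * W s (sc σ) := by
  have e0 : NN (k+1) s σ = 1/2 * ∑ x : V, ∑ y ∈ univ.erase x, XX k s σ x y := by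
    rw [NN]; rfl
  have e1 : ∀ B ∈ parts s, ∑ x ∈ B, ∑ y ∈ univ.erase x, XX k s σ x y =
      k.factorial * W s (sc σ) * (2 * ((B.card:ℚ) + (ib (sc σ) B).card - 2)) := by
    intro B hB
    have hz : ∑ D ∈ ib (sc σ) B, (D.card:ℚ) = B.card := by exact_mod_cast sum_ib_card hle hB
    have hne : (ib (sc σ) B).Nonempty := by
      obtain ⟨x, rfl⟩ := mem_parts.1 hB
      exact ⟨cls (sc σ) x, mem_ib.2 ⟨cls_mem_parts _ _, cls_subset hle x⟩⟩
    have bi := block_id (ib (sc σ) B) hne (fun D => D.card) (fun D hD => parts_card_pos (mem_ib.1 hD).1)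
    simp only [hz] at bi
    rw [← bi, sum_ib hle hB, ← sum_add_distrib, mul_sum]
    refine sum_congr rfl fun C hC => ?_
    rw [sum_congr rfl fun x hx => sum_XX ih hle hk hB hC hx, sum_const, nsmul_eq_mul]
    rw [mul_left_comm, mul_add]
    congr 2
    rw [mul_sum]
    refine sum_congr rfl fun D hD => ?_
    ring
  rw [e0, sum_cls s, sum_congr rfl e1, ← mul_sum, ← mul_sum, sum_sub_distrib, sum_add_distrib]
  have hn : ∑ B ∈ parts s, (B.card:ℚ) = Fintype.card V := by exact_mod_cast sum_parts_card s
  have hm : ∑ B ∈ parts s, ((ib (sc σ) B).card:ℚ) = (parts (sc σ)).card := by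
    have := sum_parts_ib hle (fun _ => 1)
    simp only [sum_const, smul_eq_mul, mul_one] at this
    exact_mod_cast this.symm
  rw [hn, hm, sum_const, nsmul_eq_mul, Nat.factorial_succ]
  have hk' : (k:ℚ) + 1 + 2 * (parts s).card = Fintype.card V + (parts (sc σ)).card := by exact_mod_cast hk
  push_cast
  linear_combination (-(k.factorial:ℚ) * W s (sc σ)) * hk'

lemma claim_all (k : ℕ) : Claim V k := by
  induction k with
  | zero => exact claim_zero
  | succ k ih => exact ⟨claim_i ih, claim_ii ih, claim_iii ih⟩
end main

section count
variable {V : Type*} [Fintype V] [DecidableEq V]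

/-- orbit relation -/
def orb (H : Subgroup (Perm V)) : Setoid V where
  r u v := ∃ g ∈ H, g u = v
  iseqv := by
    refine ⟨fun u => ⟨1, H.one_mem, rfl⟩, ?_, ?_⟩
    · rintro u v ⟨g, hg, rfl⟩
      exact ⟨g⁻¹, H.inv_mem hg, by simp⟩
    · rintro u v w ⟨g, hg, rfl⟩ ⟨h, hh, rfl⟩
      exact ⟨h * g, H.mul_mem hh hg, rfl⟩

lemma orb_le {S : Set (Perm V)} {s : Setoid V} :
    orb (Subgroup.closure S) ≤ s ↔ ∀ g ∈ S, ∀ u, s u (g u) := by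
  constructor
  · intro h g hg u
    exact h ⟨g, Subgroup.subset_closure hg, rfl⟩
  · rintro h u v ⟨g, hg, rfl⟩
    induction hg using Subgroup.closure_induction generalizing u with
    | mem x hx => exact h x hx u
    | one => exact s.refl u
    | mul x y _ _ hx hy => exact s.trans (@hy u) (@hx (y u))
    | inv x _ hx =>
      have := @hx (x⁻¹ u)
      rw [← Perm.mul_apply, mul_inv_cancel, Perm.one_apply] at this
      exact s.symm this

lemma orb_cons {k : ℕ} (f : Fin k → Perm V) (x y : V) :
    orb (Subgroup.closure (Set.range (Fin.cons (swap x y) f : Fin (k+1) → Perm V))) =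
      mrg (orb (Subgroup.closure (Set.range f))) x y := by
  refine eq_of_forall_ge_iff fun s => ?_
  rw [mrg_le_iff, orb_le, orb_le]
  simp only [Set.forall_mem_range, Fin.forall_fin_succ, Fin.cons_zero, Fin.cons_succ]
  rw [and_comm]
  refine and_congr_right fun _ => ⟨fun h => ?_, fun h u => rel_swap h u⟩
  have := h x
  rwa [swap_apply_left] at this

lemma swap_sum (G : Perm V → ℚ) :
    ∑ τ : Perm V, (if τ.IsSwap then G τ else 0) = 1/2 * ∑ x : V, ∑ y ∈ univ.erase x, G (swap x y) := by
  have e : ∑ x : V, ∑ y ∈ univ.erase x, G (swap x y) = ∑ p ∈ (univ : Finset V).offDiag, G (swap p.1 p.2) := by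
    rw [sum_sigma']
    refine sum_bij' (fun p _ => (p.1, p.2)) (fun p _ => ⟨p.1, p.2⟩) ?_ ?_ ?_ ?_ ?_
    · rintro ⟨x, y⟩ h
      simp only [mem_sigma, mem_erase, mem_univ, true_and, and_true, mem_offDiag] at h ⊢
      exact fun k => h k.symm
    · rintro ⟨x, y⟩ h
      simp only [mem_sigma, mem_erase, mem_univ, true_and, and_true, mem_offDiag] at h ⊢
      exact fun k => h k.symm
    · intros; rfl
    · intros; rfl
    · intros; rfl
  rw [e, ← sum_fiberwise (univ : Finset V).offDiag (fun p => swap p.1 p.2), mul_sum]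
  refine sum_congr rfl fun τ _ => ?_
  rw [sum_congr rfl (g := fun _ => G τ) (by
    intro p hp
    rw [(mem_filter.1 hp).2]), sum_const, nsmul_eq_mul]
  split_ifs with h
  · obtain ⟨a, b, hab, rfl⟩ := h
    have : (univ : Finset V).offDiag.filter (fun p => swap p.1 p.2 = swap a b) = {(a,b),(b,a)} := by
      ext ⟨x, y⟩
      simp only [mem_filter, mem_offDiag, mem_univ, true_and, mem_insert, mem_singleton, Prod.mk.injEq]
      constructor
      · rintro ⟨hxy, h⟩
        have h1 : swap a b x = y := by rw [← h, swap_apply_left]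
        rw [swap_apply_def] at h1
        split_ifs at h1 with k1 k2
        · exact Or.inl ⟨k1, h1.symm⟩
        · exact Or.inr ⟨k2, h1.symm⟩
        · exact absurd h1 hxy
      · rintro (⟨rfl, rfl⟩ | ⟨rfl, rfl⟩)
        · exact ⟨hab, rfl⟩
        · exact ⟨hab.symm, swap_comm _ _⟩
    rw [this, card_pair (by simp [hab])]
    push_cast; ring
  · have : (univ : Finset V).offDiag.filter (fun p => swap p.1 p.2 = τ) = ∅ := by
      rw [filter_eq_empty_iff]
      rintro ⟨x, y⟩ hp rfl
      exact h ⟨x, y, (mem_offDiag.1 hp).2.2, rfl⟩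
    rw [this]; simp

lemma NN_eq (k : ℕ) : ∀ (s : Setoid V) (σ : Perm V), NN k s σ =
    ∑ f : Fin k → Perm V, if (∀ i, (f i).IsSwap) ∧ (List.ofFn f).prod = σ ∧
      orb (Subgroup.closure (Set.range f)) = s then 1 else 0 := by
  induction k with
  | zero =>
    intro s σ
    rw [NN, Fintype.sum_unique]
    have : ∀ f : Fin 0 → Perm V, orb (Subgroup.closure (Set.range f)) = ⊥ := by
      intro f
      rw [eq_bot_iff, orb_le]
      rintro g ⟨i, _⟩
      exact i.elim0
    rw [this]
    congr 1
    simp only [List.ofFn_zero, List.prod_nil, IsEmpty.forall_iff, true_and, eq_iff_iff]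
    rw [and_comm, eq_comm, @eq_comm _ s]
  | succ k ih =>
    intro s σ
    rw [← (Fin.consEquiv (fun _ : Fin (k+1) => Perm V)).sum_comp, Fintype.sum_prod_type]
    have e : ∀ τ : Perm V, (∑ f : Fin k → Perm V, if (∀ i, ((Fin.consEquiv (fun _ : Fin (k+1) => Perm V)) (τ, f) i).IsSwap) ∧
        (List.ofFn ((Fin.consEquiv (fun _ : Fin (k+1) => Perm V)) (τ, f))).prod = σ ∧
      orb (Subgroup.closure (Set.range ((Fin.consEquiv (fun _ : Fin (k+1) => Perm V)) (τ, f)))) = s then (1:ℚ) else 0) =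
       if τ.IsSwap then (∑ f : Fin k → Perm V, if (∀ i, (f i).IsSwap) ∧ τ * (List.ofFn f).prod = σ ∧
         orb (Subgroup.closure (Set.range (Fin.cons τ f : Fin (k+1) → Perm V))) = s then (1:ℚ) else 0) else 0 := by
      intro τ
      have hc : ∀ f : Fin k → Perm V, (Fin.consEquiv (fun _ : Fin (k+1) => Perm V)) (τ, f) = Fin.cons τ f := fun f => rfl
      simp only [hc, Fin.forall_fin_succ, Fin.cons_zero, Fin.cons_succ, List.ofFn_succ, List.prod_cons]
      split_ifs with h
      · simp only [h, true_and]
      · simp only [h, false_and, if_false, sum_const_zero]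
    rw [sum_congr rfl fun τ _ => e τ, swap_sum, NN]
    congr 1
    refine sum_congr rfl fun x _ => sum_congr rfl fun y _ => ?_
    simp only [ih, orb_cons]
    have e2 : ∀ t : Setoid V, (if mrg t x y = s then
        (∑ f : Fin k → Perm V, if (∀ i, (f i).IsSwap) ∧ (List.ofFn f).prod = swap x y * σ ∧
      orb (Subgroup.closure (Set.range f)) = t then (1:ℚ) else 0) else 0) =
      ∑ f : Fin k → Perm V, if t = orb (Subgroup.closure (Set.range f)) then
        (if (∀ i, (f i).IsSwap) ∧ (List.ofFn f).prod = swap x y * σ ∧ mrg t x y = s then 1 else 0) else 0 := by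
      intro t
      split_ifs with h
      · refine sum_congr rfl fun f _ => ?_
        rw [← ite_and]
        congr 1
        rw [eq_comm (a := t)]
        simp only [h, and_true, eq_iff_iff]
        tauto
      · simp [h]
    rw [sum_congr rfl fun t _ => e2 t, sum_comm]
    refine sum_congr rfl fun f _ => ?_
    rw [sum_ite_eq' univ, if_pos (mem_univ _)]
    have : (swap x y * (List.ofFn f).prod = σ) ↔ ((List.ofFn f).prod = swap x y * σ) := by
      constructor
      · rintro rfl; rw [← mul_assoc, swap_mul_self, one_mul]
      · intro h; rw [h, ← mul_assoc, swap_mul_self, one_mul]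
    simp only [this]
end count

section final
variable {V : Type*} [Fintype V] [DecidableEq V]

lemma double_swap {σ : Perm V} (h : σ.cycleType = {2, 2}) :
    ∃ a b c d : V, a ≠ b ∧ c ≠ d ∧ a ≠ c ∧ a ≠ d ∧ b ≠ c ∧ b ≠ d ∧ σ = swap a b * swap c d := by
  have h2 : 2 ∈ σ.cycleType := by rw [h]; simp
  obtain ⟨c, τ, rfl, hd, hc, hcard⟩ := Perm.mem_cycleType_iff.1 h2
  have hs := Perm.card_support_eq_two.1 hcard
  rw [hd.cycleType_mul, Perm.isSwap_iff_cycleType.1 hs] at h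
  have h3 : τ.cycleType = {2} := by
    have : ({2, 2} : Multiset ℕ) = {2} + {2} := rfl
    rw [this] at h
    exact add_left_cancel h
  obtain ⟨x, y, hxy, rfl⟩ := hs
  obtain ⟨z, w, hzw, rfl⟩ := Perm.isSwap_iff_cycleType.2 h3
  have hx := hd x
  have hy := hd y
  rw [swap_apply_left] at hx
  rw [swap_apply_right] at hy
  have hx' : swap z w x = x := by tauto
  have hy' : swap z w y = y := by tauto
  refine ⟨x, y, z, w, hxy, hzw, ?_, ?_, ?_, ?_, rfl⟩
  · rintro rfl; rw [swap_apply_left] at hx'; exact hzw hx'.symm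
  · rintro rfl; rw [swap_apply_right] at hx'; exact hzw hx'
  · rintro rfl; rw [swap_apply_left] at hy'; exact hzw hy'.symm
  · rintro rfl; rw [swap_apply_right] at hy'; exact hzw hy'

lemma bot_iff (u v : V) : (⊥ : Setoid V) u v ↔ u = v := Iff.rfl

lemma W_top (r : Setoid V) [Nonempty V] : W ⊤ r = (∏ C ∈ parts r, ph C.card) *
    (Fintype.card V : ℚ) ^ (((parts r).card : ℤ) - 3) := by
  have h : parts (⊤ : Setoid V) = {univ} := by
    ext B
    rw [mem_parts, mem_singleton]
    have : ∀ x : V, cls (⊤ : Setoid V) x = univ := by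
      intro x; ext v; rw [mem_cls]; simp [Setoid.top_def]
    simp only [this]
    exact ⟨fun ⟨_, h⟩ => h.symm, fun h => ⟨Classical.arbitrary V, h.symm⟩⟩
  rw [W, h, prod_singleton, bw]
  have : ib r univ = parts r := by
    ext C; rw [mem_ib]; simp
  rw [this, card_univ]

lemma double_stats {σ : Perm V} (h : σ.cycleType = {2, 2}) :
    (parts (sc σ)).card + 2 = Fintype.card V ∧ ∏ C ∈ parts (sc σ), ph C.card = 16 := by
  obtain ⟨a, b, c, d, hab, hcd, hac, had, hbc, hbd, rfl⟩ := double_swap h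
  have h1 : ¬ (⊥ : Setoid V) c d := hcd
  have e1 : sc (swap c d) = mrg ⊥ c d := by
    have := sc_join (σ := (1 : Perm V)) (x := c) (y := d) (by rw [sc_one]; exact h1)
    rwa [mul_one, sc_one] at this
  have h2 : ¬ (mrg (⊥ : Setoid V) c d) a b := by
    rw [mrg_iff, bot_iff, bot_iff, bot_iff, bot_iff, bot_iff]
    tauto
  have e2 : sc (swap a b * swap c d) = mrg (mrg ⊥ c d) a b := by
    rw [sc_join (by rw [e1]; exact h2), e1]
  have ca : cls (mrg (⊥ : Setoid V) c d) a = {a} := by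
    rw [cls_mrg, if_neg, cls_bot]
    rw [bot_iff, bot_iff]; tauto
  have cb : cls (mrg (⊥ : Setoid V) c d) b = {b} := by
    rw [cls_mrg, if_neg, cls_bot]
    rw [bot_iff, bot_iff]; tauto
  have k1 := card_parts_mrg h1
  have k2 := card_parts_mrg h2
  have ph1 : ph 1 = 1 := by norm_num [ph, cc]
  have ph2 : ph 2 = 4 := by norm_num [ph, cc, Nat.factorial]
  have p1 := prod_parts_mrg h1 (fun C => ph C.card)
  have p2 := prod_parts_mrg h2 (fun C => ph C.card)
  have p0 : ∏ C ∈ parts (⊥ : Setoid V), ph C.card = 1 := by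
    refine prod_eq_one fun B hB => ?_
    obtain ⟨x, rfl⟩ := mem_parts.1 hB
    simp [ph1, cls_bot]
  have u1 : ({c} ∪ {d} : Finset V).card = 2 := card_pair hcd
  have u2 : ({a} ∪ {b} : Finset V).card = 2 := card_pair hab
  simp only [ca, cb, cls_bot, card_singleton, ph1, u1, u2, ph2, p0] at p1 p2
  rw [parts_bot_card] at k1
  rw [e2]
  refine ⟨by omega, ?_⟩
  linarith

lemma NN_final {σ : Perm V} (h : σ.cycleType = {2, 2}) (hn : 4 ≤ Fintype.card V) :
    NN (2 * Fintype.card V - 4) ⊤ σ = (2 * Fintype.card V - 4).factorial *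
      (16 * (Fintype.card V : ℚ) ^ ((Fintype.card V : ℤ) - 5)) := by
  haveI : Nonempty V := Fintype.card_pos_iff.1 (by omega)
  obtain ⟨h1, h2⟩ := double_stats h
  have h3 : (parts (⊤ : Setoid V)).card = 1 := by
    rw [card_eq_one]
    refine ⟨univ, ?_⟩
    ext B
    rw [mem_parts, mem_singleton]
    have : ∀ x : V, cls (⊤ : Setoid V) x = univ := by
      intro x; ext v; rw [mem_cls]; simp [Setoid.top_def]
    simp only [this]
    exact ⟨fun ⟨_, h⟩ => h.symm, fun h => ⟨Classical.arbitrary V, h.symm⟩⟩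
  rw [(claim_all _).2.2 _ _ le_top (by omega), W_top, h2]
  congr 3
  omega

lemma trans_iff {k : ℕ} (σ : Perm V) (f : Fin k → Perm V) (h : σ * (List.ofFn f).prod = 1) :
    (∀ x y, ∃ g ∈ Subgroup.closure ({σ} ∪ Set.range f), g x = y) ↔
      orb (Subgroup.closure (Set.range f)) = ⊤ := by
  have hσ : σ ∈ Subgroup.closure (Set.range f) := by
    rw [eq_inv_of_mul_eq_one_left h]
    apply Subgroup.inv_mem
    apply Subgroup.list_prod_mem
    intro g hg
    rw [List.mem_ofFn] at hg
    exact Subgroup.subset_closure hg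
  have e : Subgroup.closure ({σ} ∪ Set.range f) = Subgroup.closure (Set.range f) := by
    apply le_antisymm
    · rw [Subgroup.closure_le]
      rintro g (rfl | hg)
      · exact hσ
      · exact Subgroup.subset_closure hg
    · exact Subgroup.closure_mono Set.subset_union_right
  rw [e, eq_top_iff]
  exact ⟨fun h x y _ => h x y, fun h x y => h trivial⟩

lemma total_count (k : ℕ) : ((Nat.card {p : Perm V × (Fin k → Perm V) //
    p.1.cycleType = {2, 2} ∧ (∀ i, (p.2 i).IsSwap) ∧ p.1 * (List.ofFn p.2).prod = 1 ∧
    (∀ x y, ∃ g ∈ Subgroup.closure ({p.1} ∪ Set.range p.2), g x = y)} : ℕ) : ℚ) =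
    ∑ σ ∈ univ.filter (fun σ : Perm V => σ.cycleType = {2, 2}), NN k ⊤ σ⁻¹ := by
  rw [Nat.card_eq_fintype_card, Fintype.card_subtype, card_filter]
  push_cast
  rw [Fintype.sum_prod_type, sum_filter]
  refine sum_congr rfl fun σ _ => ?_
  rw [NN_eq]
  split_ifs with h
  · refine sum_congr rfl fun f _ => ?_
    congr 1
    simp only [h, true_and, eq_iff_iff]
    refine and_congr_right fun _ => ?_
    constructor
    · rintro ⟨h1, h2⟩
      exact ⟨eq_inv_of_mul_eq_one_right h1, (trans_iff _ _ h1).1 h2⟩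
    · rintro ⟨h1, h2⟩
      have h1' : σ * (List.ofFn f).prod = 1 := by rw [h1, mul_inv_cancel]
      exact ⟨h1', (trans_iff _ _ h1').2 h2⟩
  · refine sum_eq_zero fun f _ => if_neg ?_
    tauto
end final

lemma final_count (n : ℕ) (hn : 4 ≤ n) : ((Nat.card {p : Perm (Fin n) × (Fin (2 * n - 4) → Perm (Fin n)) //
    p.1.cycleType = {2, 2} ∧ (∀ i, (p.2 i).IsSwap) ∧ p.1 * (List.ofFn p.2).prod = 1 ∧
    (∀ x y, ∃ g ∈ Subgroup.closure ({p.1} ∪ Set.range p.2), g x = y)} : ℕ) : ℚ) =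
    (n.factorial : ℚ) * 2 * (((2 * n - 4).factorial : ℚ) / ((n - 4).factorial : ℚ)) * (n : ℚ) ^ ((n : ℤ) - 5) := by
  rw [total_count, sum_congr rfl (g := fun _ => ((2 * n - 4).factorial : ℚ) *
      (16 * (n : ℚ) ^ ((n : ℤ) - 5)))]
  · rw [sum_const, nsmul_eq_mul]
    have := Perm.card_of_cycleType_mul_eq (Fin n) {2, 2}
    rw [if_pos (by simpa using hn)] at this
    have e : (∏ m ∈ ({2, 2} : Multiset ℕ).toFinset, (Multiset.count m ({2, 2} : Multiset ℕ)).factorial) = 2 := by decide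
    rw [e, Fintype.card_fin] at this
    simp only [Multiset.insert_eq_cons, Multiset.sum_cons, Multiset.sum_singleton, Multiset.prod_cons, Multiset.prod_singleton] at this
    have h2 : ((#{g : Perm (Fin n) | g.cycleType = {2, 2}} : ℕ) : ℚ) * (((n - 4).factorial : ℚ) * 8) = n.factorial := by
      rw [← this]
      push_cast
      simp only [Multiset.insert_eq_cons]
      rw [show n - (2 + 2) = n - 4 from rfl]
      ring
    rw [← h2]
    have : ((n-4).factorial : ℚ) ≠ 0 := by exact_mod_cast Nat.factorial_ne_zero _
    field_simp
    ring
  · intro σ hσ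
    have h := (mem_filter.1 hσ).2
    have := NN_final (σ := σ⁻¹) (by rw [Perm.cycleType_inv, h]) (by simpa using hn)
    simpa using this

end combinatorics

end HN

/-- Genus-zero Hurwitz number h_{1^2}: one branch point of cycle type (2,2,1^{n-4}) and 2n-4 transpositions; h_{1^2} = 2 * ((2n-4)!/(n-4)!) * n^(n-5). -/
theorem hurwitz_number_1_2 (n : ℕ) (hn : 4 ≤ n) :
    (Nat.card {p : Perm (Fin n) × (Fin (2 * n - 4) → Perm (Fin n)) //
        p.1.cycleType = {2, 2} ∧
        (∀ i, (p.2 i).IsSwap) ∧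
        p.1 * (List.ofFn p.2).prod = 1 ∧
        (∀ x y : Fin n, ∃ g ∈ Subgroup.closure ({p.1} ∪ Set.range p.2),
          g x = y)} : ℚ) =
      (n.factorial : ℚ) * (2) *
        (((2 * n - 4).factorial : ℚ) / ((n - 4).factorial : ℚ)) *
        (n : ℚ) ^ ((n : ℤ) - 5) := by
  exact HN.final_count n hn
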